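/- There exists b > 0 such that the following holds. For every η' < η and every probability density ρ on 𝕊 that is Lipschitz on J_z with constant L > 0 for some z ∈ 𝕊, writing ρ_{n,k} = ℒ_{T_{n,k}} ⋯ ℒ_{T_{n,1}} ρ for the pushforward density and ρ̂_{n,k} for the SRB density of T_{n,k}, one has ‖ρ_{n,k} − ρ̂_{n,k}‖_{L¹(𝔪)} ≤ C n^{−η'} for all n and all k ≥ b·log n, where the constant C > 0 depends only on η' and L. -/

import Mathlib

open MeasureTheory Filter Topology Set UniformConvergence

noncomputable section

instance : Fact ((0:ℝ) < 1) := ⟨zero_lt_one⟩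

/-- The circle `𝕊 = ℝ/ℤ`. -/
abbrev Circle1 : Type := AddCircle (1 : ℝ)

/-- A `C²` expanding circle map with expansion `≥ lam` and `‖T''‖_∞ ≤ Astar`,
encoded by a lift `F : ℝ → ℝ` satisfying `F (x+1) = F x + deg`. -/
structure CM (lam Astar : ℝ) where
  F : ℝ → ℝ
  deg : ℤ
  lift_add_one : ∀ x : ℝ, F (x + 1) = F x + deg
  contDiff : ContDiff ℝ 2 F
  expanding : ∀ x : ℝ, lam ≤ deriv F x
  second_bound : ∀ x : ℝ, |deriv (deriv F) x| ≤ Astar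

namespace CM

variable {lam Astar : ℝ}

/-- The induced map on the circle. -/
def toMap (T : CM lam Astar) : Circle1 → Circle1 :=
  fun x => (↑(T.F ((AddCircle.equivIco 1 0 x : ℝ))) : Circle1)

/-- The derivative of `T`, as a function on the circle. -/
def dmap (T : CM lam Astar) : Circle1 → ℝ :=
  fun x => deriv T.F ((AddCircle.equivIco 1 0 x : ℝ))

end CM

/-- The `C¹` distance on the space of maps. -/
def dC1 {lam Astar : ℝ} (T₁ T₂ : CM lam Astar) : ℝ :=
  (⨆ x : Circle1, dist (T₁.toMap x) (T₂.toMap x)) + (⨆ x : Circle1, |T₁.dmap x - T₂.dmap x|)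

/-- The transfer operator `ℒ_T h (x) = ∑_{T y = x} h y / T' y`. -/
def transfer {lam Astar : ℝ} (T : CM lam Astar) (h : Circle1 → ℝ) : Circle1 → ℝ :=
  fun x => ∑' y : {y : Circle1 // T.toMap y = x}, h y / T.dmap y

/-- Iterated transfer operators `ℒ_k ⋯ ℒ_1` of the sequence `T_1, T_2, …` (`Ts i = T_i`). -/
def transferIter {lam Astar : ℝ} (Ts : ℕ → CM lam Astar) : ℕ → (Circle1 → ℝ) → (Circle1 → ℝ)
  | 0, h => h
  | (k+1), h => transfer (Ts (k+1)) (transferIter Ts k h)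

/-- Composition `T_k ∘ ⋯ ∘ T_1` as circle maps. -/
def mapIter {lam Astar : ℝ} (Ts : ℕ → CM lam Astar) : ℕ → Circle1 → Circle1
  | 0 => id
  | (k+1) => (Ts (k+1)).toMap ∘ mapIter Ts k

/-- Composition of the lifts `F_k ∘ ⋯ ∘ F_1`. -/
def liftIter {lam Astar : ℝ} (Ts : ℕ → CM lam Astar) : ℕ → ℝ → ℝ
  | 0 => id
  | (k+1) => (Ts (k+1)).F ∘ liftIter Ts k

/-- A real representative of `z`. -/
def zrep (z : Circle1) : ℝ := (AddCircle.equivIco 1 0 z : ℝ)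

/-- The coordinate on the cut circle `J_z = 𝕊 ∖ {z}`. -/
def arcCoord (z x : Circle1) : ℝ := ((AddCircle.equivIoc 1 (zrep z) x : ℝ))

/-- `|x − y|_z`: the length of the subarc of `J_z` connecting `x` and `y`. -/
def arcDist (z x y : Circle1) : ℝ := |arcCoord z x - arcCoord z y|

/-- `g` is Lipschitz on `J_z = 𝕊 ∖ {z}` with constant `L`. -/
def LipOnArc (z : Circle1) (L : ℝ) (g : Circle1 → ℝ) : Prop :=
  ∀ x y : Circle1, x ≠ z → y ≠ z → |g x - g y| ≤ L * arcDist z x y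

/-- A probability density w.r.t. the Haar–Lebesgue measure `𝔪` on the circle. -/
def IsProbDensity (ψ : Circle1 → ℝ) : Prop :=
  Integrable ψ volume ∧ (∫ x : Circle1, ψ x) = 1 ∧ ∀ x, 0 ≤ ψ x

/-- The class `𝒟_L`: positive probability densities whose logarithm is Lipschitz
with constant `L` on `J_z` for some `z`. -/
def memD (L : ℝ) (ψ : Circle1 → ℝ) : Prop :=
  IsProbDensity ψ ∧ (∀ x, 0 < ψ x) ∧ ∃ z : Circle1, LipOnArc z L (fun x => Real.log (ψ x))

/-- The `L¹(𝔪)` norm. -/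
def l1norm (h : Circle1 → ℝ) : ℝ := ∫ x : Circle1, |h x|

/-- The supremum norm. -/
def supNorm (h : Circle1 → ℝ) : ℝ := ⨆ x : Circle1, |h x|

/-- The Lipschitz constant of `h` (w.r.t. the metric of the circle). -/
def lipConst (h : Circle1 → ℝ) : ℝ :=
  sInf {L : ℝ | 0 ≤ L ∧ ∀ x y : Circle1, |h x - h y| ≤ L * dist x y}

/-- The Lipschitz norm `‖h‖_Lip = Lip(h) + ‖h‖_∞`. -/
def lipNorm (h : Circle1 → ℝ) : ℝ := lipConst h + supNorm h

/-- `ρ` is the density of the SRB measure of `T`: the density of a `T`-invariant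
probability measure equivalent to `𝔪`. -/
def IsSRBDensity {lam Astar : ℝ} (T : CM lam Astar) (ρ : Circle1 → ℝ) : Prop :=
  IsProbDensity ρ ∧ (∀ᵐ x : Circle1, 0 < ρ x) ∧
    Measure.map T.toMap (volume.withDensity (fun x => ENNReal.ofReal (ρ x))) =
      volume.withDensity (fun x => ENNReal.ofReal (ρ x))

section QDS

variable {lam Astar : ℝ}

/-- `x_{n,k} = T_{n,k} ∘ ⋯ ∘ T_{n,1}` for a triangular array. -/
def arrIter (Tarr : ℕ → ℕ → CM lam Astar) (n : ℕ) : ℕ → Circle1 → Circle1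
  | 0 => id
  | (k+1) => (Tarr n (k+1)).toMap ∘ arrIter Tarr n k

/-- `ℒ_{n,k} ⋯ ℒ_{n,1}` for a triangular array. -/
def arrTransfer (Tarr : ℕ → ℕ → CM lam Astar) (n : ℕ) : ℕ → (Circle1 → ℝ) → (Circle1 → ℝ)
  | 0, h => h
  | (k+1), h => transfer (Tarr n (k+1)) (arrTransfer Tarr n k h)

/-- `f_{n,k} = f ∘ T_{n,k} ∘ ⋯ ∘ T_{n,1}` evaluated at `x`. -/
def fnk (Tarr : ℕ → ℕ → CM lam Astar) (f : Circle1 → ℝ) (n k : ℕ) (x : Circle1) : ℝ :=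
  f (arrIter Tarr n k x)

/-- `ζₙ(x,t) = n⁻¹ (∑_{k<⌊nt⌋} f_{n,k}(x) + {nt}·f_{n,⌊nt⌋}(x))`. -/
def zetaP (Tarr : ℕ → ℕ → CM lam Astar) (f : Circle1 → ℝ) (n : ℕ) (x : Circle1) (t : ℝ) : ℝ :=
  (n : ℝ)⁻¹ * ((∑ k ∈ Finset.range ⌊(n : ℝ) * t⌋₊, fnk Tarr f n k x) +
    Int.fract ((n : ℝ) * t) * fnk Tarr f n ⌊(n : ℝ) * t⌋₊ x)

/-- `ξₙ(x,t) = √n ζₙ(x,t) − √n μ(ζₙ(·,t))` for a measure `μ`. -/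
def xiP (Tarr : ℕ → ℕ → CM lam Astar) (f : Circle1 → ℝ) (μ : Measure Circle1) (n : ℕ)
    (x : Circle1) (t : ℝ) : ℝ :=
  Real.sqrt n * zetaP Tarr f n x t - Real.sqrt n * ∫ y, zetaP Tarr f n y t ∂μ

/-- The Hölder continuity (exponent `η`) of the curve `γ` on `[0,1]`, w.r.t. `d_{C¹}`. -/
def HolderCurve (η : ℝ) (γ : ℝ → CM lam Astar) : Prop :=
  ∃ H : ℝ, ∀ s ∈ Icc (0:ℝ) 1, ∀ t ∈ Icc (0:ℝ) 1, dC1 (γ s) (γ t) ≤ H * |s - t| ^ η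

/-- The convergence-rate condition `sup_n n^η sup_t d_{C¹}(T_{n,⌊nt⌋}, γ_t) < ∞`. -/
def ArrayApprox (η : ℝ) (γ : ℝ → CM lam Astar) (Tarr : ℕ → ℕ → CM lam Astar) : Prop :=
  ∃ M : ℝ, ∀ n : ℕ, 1 ≤ n → ∀ t ∈ Icc (0:ℝ) 1,
    (n : ℝ) ^ η * dC1 (Tarr n ⌊(n : ℝ) * t⌋₊) (γ t) ≤ M

end QDS

/-- The path space: functions `[0,1] → ℝ` with the topology of uniform convergence;
continuous paths (with the supremum metric) embed isometrically. -/
abbrev PathSpace : Type := (Icc (0:ℝ) 1) →ᵤ ℝ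

instance : MeasurableSpace PathSpace := borel PathSpace

/-- A function `[0,1] → ℝ` (given as a function on `ℝ`) as a point of the path space. -/
def pathOf (g : ℝ → ℝ) : PathSpace := UniformFun.ofFun (fun t => g t)

/-- Evaluation of a path at time `t` (clamped to `[0,1]`). -/
def evalPath (t : ℝ) (ω : PathSpace) : ℝ := UniformFun.toFun ω (projIcc 0 1 zero_le_one t)


section Extra

variable {lam Astar : ℝ}

/-- `μ(ζₙ(·,t))` for the measure with density `ρ` w.r.t. `𝔪`. -/
def zetaMean (Tarr : ℕ → ℕ → CM lam Astar) (f : Circle1 → ℝ) (ρ : Circle1 → ℝ)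
    (n : ℕ) (t : ℝ) : ℝ :=
  ∫ y : Circle1, zetaP Tarr f n y t * ρ y

/-- `𝔪(ζₙ(·,t))`, the mean w.r.t. the Lebesgue measure. -/
def zetaMeanM (Tarr : ℕ → ℕ → CM lam Astar) (f : Circle1 → ℝ) (n : ℕ) (t : ℝ) : ℝ :=
  ∫ y : Circle1, zetaP Tarr f n y t

/-- `ξₙ(x,t) = √n ζₙ(x,t) − √n μ(ζₙ(·,t))`, where `μ` has density `ρ`. -/
def xiD (Tarr : ℕ → ℕ → CM lam Astar) (f : Circle1 → ℝ) (ρ : Circle1 → ℝ)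
    (n : ℕ) (x : Circle1) (t : ℝ) : ℝ :=
  Real.sqrt n * zetaP Tarr f n x t - Real.sqrt n * zetaMean Tarr f ρ n t

end Extra

/-- The σ-algebra `𝔉_t` on the path space, generated by the evaluations at times `s ∈ [0,t]`. -/
def pathFiltration (t : ℝ) : MeasurableSpace PathSpace :=
  ⨆ (s : ℝ) (_ : 0 ≤ s ∧ s ≤ t), MeasurableSpace.comap (evalPath s) (borel ℝ)

/-- The process `M_t(ω) = A(ω(t)) − A(ω(0)) − ½∫₀ᵗ σ̂ₛ²·A''(ω(s)) ds`. -/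
def MGproc (σ2 : ℝ → ℝ) (A : ℝ → ℝ) (t : ℝ) (ω : PathSpace) : ℝ :=
  A (evalPath t ω) - A (evalPath 0 ω) -
    (1/2) * ∫ s in (0:ℝ)..t, σ2 s * deriv (deriv A) (evalPath s ω)

/-- `P` solves the martingale problem on `C⁰([0,1],ℝ)` for the generator `½σ̂ₜ² d²/dx²`,
started at `0`:  `P` is a probability measure, concentrated on continuous paths starting at `0`,
and for every `A ∈ C_c^∞(ℝ)` the process `MGproc σ2 A` is a `P`-martingale w.r.t. the
natural filtration `𝔉_t`.  -/
def SolvesMartingaleProblem (σ2 : ℝ → ℝ) (P : Measure PathSpace) : Prop :=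
  IsProbabilityMeasure P ∧
  P {ω : PathSpace | evalPath 0 ω = 0} = 1 ∧
  P {ω : PathSpace | Continuous (UniformFun.toFun ω)} = 1 ∧
  ∀ A : ℝ → ℝ, ContDiff ℝ (⊤ : ℕ∞) A → HasCompactSupport A →
    (∀ t ∈ Icc (0:ℝ) 1, Integrable (MGproc σ2 A t) P) ∧
    (∀ t ∈ Icc (0:ℝ) 1, @Measurable PathSpace ℝ (pathFiltration t) _ (MGproc σ2 A t)) ∧
    (∀ s ∈ Icc (0:ℝ) 1, ∀ t ∈ Icc (0:ℝ) 1, s ≤ t →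
      P[MGproc σ2 A t | pathFiltration s] =ᵐ[P] MGproc σ2 A s)

end

/-!
Expanding maps contract the log-Lipschitz constants of densities up to a bounded error, so a cone
of log-Lipschitz densities is mapped strictly inside itself. A density in the smaller cone is a
constant `1 - θ` plus `θ` times a density in the larger one; after subtraction the constants
cancel, so any two elements of the cone are brought together in `L¹` at the exponential rate `θ^m`,
along every sequence of maps. On the cone, moreover, `ℒ_T` depends on `T` in a Lipschitz way, from
`d_{C¹}` to `L¹`. The last `m` maps `T_{n,i}`, `k - m < i ≤ k`, are within a multiple of
`(1+m)^η n^{-η}` of `T_{n,k}`, so replacing them all by `T_{n,k}` costs at most a multiple of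
`(1+m)^{1+η} n^{-η}`. Choosing `m` of order `log n` makes `θ^m ≤ n^{-η}` and leaves only a
polylogarithmic loss.

The initial density may vanish and may jump at `z`, so it lies in no cone. It is replaced by an
`O(n^{-η})`-close density with log-Lipschitz constant of order `n^{2η}`; since transfer operators
contract `L¹`, this error persists unamplified, and the first `k - m` maps, of order `log n` in
number, bring the new density into the cone. The SRB density, known only up to null sets, is
handled by approximating it in `L¹` by densities in the cone.
-/

theorem exp_sub_one_le_mul_exp (x : ℝ) : Real.exp x - 1 ≤ x * Real.exp x := by
  have h := mul_le_mul_of_nonneg_right (Real.add_one_le_exp (-x)) (Real.exp_pos x).le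
  rw [← Real.exp_add, neg_add_cancel, Real.exp_zero] at h
  linarith

theorem exp_mul_sub_one_le {κ δ : ℝ} (hκ : 0 ≤ κ) (hδ₀ : 0 ≤ δ) (hδ₁ : δ ≤ 1) :
    Real.exp (κ * δ) - 1 ≤ κ * Real.exp κ * δ :=
  calc Real.exp (κ * δ) - 1 ≤ κ * δ * Real.exp (κ * δ) := exp_sub_one_le_mul_exp _
    _ ≤ κ * δ * Real.exp κ := by
      gcongr
      exact mul_le_of_le_one_right hκ hδ₁
    _ = κ * Real.exp κ * δ := by ring

theorem exists_log_rpow_le_rpow {β c q s : ℝ} (hβ : 0 ≤ β) (hc : 0 < c) (hq : 0 < q) (hs : 0 < s) :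
    ∃ D, 0 < D ∧ ∀ x : ℝ, 1 ≤ x → (β * Real.log x + c) ^ q ≤ D * x ^ s := by
  set ε := s / q with hε
  have hε₀ : 0 < ε := div_pos hs hq
  refine ⟨(β / ε + c) ^ q, by positivity, fun x hx => ?_⟩
  have hx₀ : 0 < x := one_pos.trans_le hx
  have hlog₀ : 0 ≤ Real.log x := Real.log_nonneg hx
  have hlog : Real.log x ≤ x ^ ε / ε := Real.log_le_rpow_div hx₀.le hε₀
  have hone : 1 ≤ x ^ ε := Real.one_le_rpow hx hε₀.le
  calc (β * Real.log x + c) ^ q ≤ (β * (x ^ ε / ε) + c * x ^ ε) ^ q := by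
        gcongr
        exact le_mul_of_one_le_right hc.le hone
    _ = ((β / ε + c) * x ^ ε) ^ q := by ring_nf
    _ = (β / ε + c) ^ q * x ^ s := by
        rw [Real.mul_rpow (by positivity) (by positivity), ← Real.rpow_mul hx₀.le,
          hε, div_mul_cancel₀ _ hq.ne']

theorem exists_log_rpow_mul_rpow_neg_le {β q s s' : ℝ} (hβ : 0 ≤ β) (hq : 0 < q) (hs : s' < s) :
    ∃ D, 0 < D ∧ ∀ x : ℝ, 1 ≤ x → ∀ y, 0 ≤ y → y ≤ β * Real.log x + 1 →
      (1 + y) ^ q * x ^ (-s) ≤ D * x ^ (-s') := by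
  obtain ⟨D, hD₀, hD⟩ := exists_log_rpow_le_rpow hβ two_pos hq (sub_pos.2 hs)
  refine ⟨D, hD₀, fun x hx y hy₀ hy => ?_⟩
  have hx₀ : 0 < x := one_pos.trans_le hx
  have hlog : 1 + y ≤ β * Real.log x + 2 := by linarith
  calc (1 + y) ^ q * x ^ (-s) ≤ D * x ^ (s - s') * x ^ (-s) := by
        gcongr
        exact (Real.rpow_le_rpow (by positivity) hlog hq.le).trans (hD x hx)
    _ = D * x ^ (-s') := by
        rw [mul_assoc, ← Real.rpow_add hx₀]
        ring_nf

theorem one_div_two_mul_rpow_neg_sq_le {x : ℝ} (hx : 0 ≤ x) (s : ℝ) :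
    1 / (2 * (x ^ (-s)) ^ 2) ≤ x ^ (s * 2) := by
  rw [Real.rpow_neg hx, inv_pow, Real.rpow_mul hx, Real.rpow_two, one_div, mul_inv, inv_inv]
  linarith [sq_nonneg (x ^ s)]

theorem rpow_le_pow_of_mul_log_le {b x s : ℝ} (hb : 1 < b) (hx : 0 < x) {k : ℕ}
    (h : s / Real.log b * Real.log x ≤ k) : x ^ s ≤ b ^ k := by
  rw [Real.le_pow_iff_log_le (Real.rpow_pos_of_pos hx s) (one_pos.trans hb), Real.log_rpow hx]
  rwa [div_mul_eq_mul_div, div_le_iff₀ (Real.log_pos hb)] at h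

theorem exists_add_eq_of_mul_log_le {b c x s u : ℝ} (hb : 1 < b) (hc : 1 < c) (hx : 1 ≤ x)
    (hs : 0 ≤ s) (hu : 0 ≤ u) {k : ℕ} (h : (s / Real.log b + u / Real.log c) * Real.log x ≤ k) :
    ∃ j m, j + m = k ∧ x ^ u ≤ c ^ (j + 1) ∧ x ^ s ≤ b ^ m ∧
      m ≤ s / Real.log b * Real.log x + 1 := by
  have hx₀ : 0 < x := one_pos.trans_le hx
  have hlog_x : 0 ≤ Real.log x := Real.log_nonneg hx
  have hlog_b : 0 < Real.log b := Real.log_pos hb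
  have hlog_c : 0 < Real.log c := Real.log_pos hc
  have hm_le := Nat.le_ceil (s / Real.log b * Real.log x)
  have hm_lt := Nat.ceil_lt_add_one (a := s / Real.log b * Real.log x) (by positivity)
  rw [add_mul] at h
  have hmk : ⌈s / Real.log b * Real.log x⌉₊ ≤ k :=
    Nat.ceil_le.2 ((le_add_of_nonneg_right (by positivity)).trans h)
  obtain ⟨j, rfl⟩ := Nat.exists_eq_add_of_le' hmk
  refine ⟨j, _, rfl, rpow_le_pow_of_mul_log_le hc hx₀ ?_, rpow_le_pow_of_mul_log_le hb hx₀ hm_le,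
    hm_lt.le⟩
  push_cast at h ⊢
  linarith

theorem eq_of_abs_intCast_sub_lt_one {m n : ℤ} (h : |(m : ℝ) - n| < 1) : m = n := by
  have h' : |m - n| < 1 := by exact_mod_cast h
  exact sub_eq_zero.1 (Int.abs_lt_one_iff.1 h')

theorem exists_int_forall_abs_sub_le {X : Type*} [TopologicalSpace X] [PreconnectedSpace X]
    [Nonempty X] {f : X → ℝ} (hf : Continuous f) {δ : ℝ} (hδ : δ < 1 / 2)
    (h : ∀ x, |f x - round (f x)| ≤ δ) : ∃ p : ℤ, ∀ x, |f x - p| ≤ δ := by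
  have hconst : IsLocallyConstant fun x => round (f x) := by
    refine (IsLocallyConstant.iff_eventually_eq _).2 fun x => ?_
    have hnear : ∀ᶠ y in 𝓝 x, |f y - f x| < 1 - 2 * δ :=
      Metric.tendsto_nhds.1 hf.continuousAt _ (by linarith)
    filter_upwards [hnear] with y hy
    refine eq_of_abs_intCast_sub_lt_one ?_
    have hx := abs_le.1 (h x)
    have hy' := abs_le.1 (h y)
    rw [abs_lt] at hy ⊢
    constructor <;> linarith
  obtain ⟨x₀⟩ := ‹Nonempty X›
  refine ⟨round (f x₀), fun x => ?_⟩
  rw [hconst.apply_eq_of_preconnectedSpace x₀ x]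
  exact h x

theorem intervalIntegrable_comp_add_natCast {h : ℝ → ℝ} {N : ℕ}
    (hh : IntervalIntegrable h volume 0 N) {i : ℕ} (hi : i < N) :
    IntervalIntegrable (fun x => h (x + i)) volume 0 1 := by
  have hsub : IntervalIntegrable h volume i (i + 1) := by
    refine hh.mono_set ?_
    rw [uIcc_of_le (by linarith), uIcc_of_le N.cast_nonneg]
    exact Icc_subset_Icc i.cast_nonneg (by exact_mod_cast hi)
  simpa using hsub.comp_add_right (i : ℝ)

theorem intervalIntegral_sum_comp_add_natCast {h : ℝ → ℝ} {N : ℕ}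
    (hh : IntervalIntegrable h volume 0 N) :
    ∫ x in (0 : ℝ)..1, ∑ i ∈ Finset.range N, h (x + i) = ∫ x in (0 : ℝ)..N, h x := by
  have hpiece : ∀ i < N, IntervalIntegrable h volume (i : ℕ) (i + 1 : ℕ) := fun i hi => by
    simpa [add_comm] using (intervalIntegrable_comp_add_natCast hh hi).comp_add_right (-(i : ℝ))
  rw [intervalIntegral.integral_finsetSum fun i hi =>
      intervalIntegrable_comp_add_natCast hh (Finset.mem_range.1 hi),
    ← Nat.cast_zero, ← intervalIntegral.sum_integral_adjacent_intervals hpiece]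
  refine Finset.sum_congr rfl fun i _ => ?_
  rw [intervalIntegral.integral_comp_add_right, Nat.cast_zero, zero_add, Nat.cast_add_one,
    add_comm (1 : ℝ)]

/-! ### Lipschitz envelopes and log-Lipschitz functions -/

section Metric

variable {X : Type*} [PseudoMetricSpace X]

/-- The Pasch–Hausdorff envelope of `f`: when `f` is bounded below, its largest `K`-Lipschitz
minorant. -/
noncomputable def lipEnvelope (K : NNReal) (f : X → ℝ) (x : X) : ℝ := ⨅ y, f y + K * dist x y

variable {K : NNReal} {f : X → ℝ}

theorem bddBelow_range_add_mul_dist (hf : BddBelow (range f)) (K : NNReal) (x : X) :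
    BddBelow (range fun y => f y + K * dist x y) := by
  obtain ⟨m, hm⟩ := hf
  refine ⟨m, ?_⟩
  rintro _ ⟨y, rfl⟩
  have hmy : m ≤ f y := hm ⟨y, rfl⟩
  exact le_add_of_le_of_nonneg hmy (by positivity)

theorem lipschitzWith_lipEnvelope (hf : BddBelow (range f)) :
    LipschitzWith K (lipEnvelope K f) := by
  refine LipschitzWith.of_le_add_mul K fun x y => ?_
  have : Nonempty X := ⟨x⟩
  rw [← sub_le_iff_le_add]
  refine le_ciInf fun w => ?_
  have hinf := ciInf_le (bddBelow_range_add_mul_dist hf K x) w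
  have htri := mul_le_mul_of_nonneg_left (dist_triangle x y w) K.coe_nonneg
  unfold lipEnvelope
  linarith

theorem lipEnvelope_le (hf : BddBelow (range f)) (x : X) : lipEnvelope K f x ≤ f x := by
  simpa [lipEnvelope] using ciInf_le (bddBelow_range_add_mul_dist hf K x) x

theorem le_lipEnvelope {c : ℝ} {x : X} (h : ∀ y, c ≤ f y + K * dist x y) :
    c ≤ lipEnvelope K f x :=
  have : Nonempty X := ⟨x⟩
  le_ciInf h

theorem sub_le_lipEnvelope {A r ε : ℝ} (hf : ∀ y, A ≤ f y) {x : X} (hx : f x - A ≤ K * r)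
    (hε : 0 ≤ ε) (h : ∀ y, dist x y < r → f x ≤ f y + ε + K * dist x y) :
    f x - ε ≤ lipEnvelope K f x := by
  refine le_lipEnvelope fun y => ?_
  rcases lt_or_ge (dist x y) r with hxy | hxy
  · linarith [h y hxy]
  · have hK := mul_le_mul_of_nonneg_left hxy K.coe_nonneg
    linarith [hf y]

theorem exists_lipschitzWith_forall_abs_sub_le [CompactSpace X] (hf : Continuous f) {ε : ℝ}
    (hε : 0 < ε) : ∃ (K : NNReal) (u : X → ℝ), LipschitzWith K u ∧ ∀ x, |u x - f x| ≤ ε := by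
  obtain ⟨r, hr, hfr⟩ := Metric.uniformContinuous_iff.1
    (CompactSpace.uniformContinuous_of_continuous hf) ε hε
  obtain ⟨B, hB⟩ := (isCompact_range hf).bddAbove
  obtain ⟨A, hA⟩ := (isCompact_range hf).bddBelow
  refine ⟨(B - A).toNNReal / r.toNNReal, _, lipschitzWith_lipEnvelope ⟨A, hA⟩, fun x => ?_⟩
  have hle := lipEnvelope_le (K := (B - A).toNNReal / r.toNNReal) ⟨A, hA⟩ x
  have hge := sub_le_lipEnvelope (K := (B - A).toNNReal / r.toNNReal) (r := r)
    (fun y => hA ⟨y, rfl⟩) (x := x) ?_ hε.le fun y hxy => ?_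
  · rw [abs_le]
    constructor <;> linarith
  · rw [NNReal.coe_div, Real.coe_toNNReal r hr.le, div_mul_cancel₀ _ hr.ne']
    exact (sub_le_sub_right (hB ⟨x, rfl⟩) A).trans (Real.le_coe_toNNReal _)
  · have hclose := (abs_lt.1 (hfr hxy)).2
    have : 0 ≤ ((B - A).toNNReal / r.toNNReal : NNReal) * dist x y := by positivity
    linarith

/-- Log-Lipschitz functions, in a multiplicative form that makes sense for nonnegative `g`:
where `g > 0` it says that `log g` is `a`-Lipschitz. -/
def LogLip (a : ℝ) (g : X → ℝ) : Prop :=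
  ∀ x y, g x ≤ Real.exp (a * dist x y) * g y

namespace LogLip

variable {a b c : ℝ} {g : X → ℝ}

theorem mono (hg : LogLip a g) (hab : a ≤ b) (hg₀ : ∀ x, 0 ≤ g x) : LogLip b g := fun x y =>
  (hg x y).trans <| by
    have := hg₀ y
    gcongr

theorem const_mul (hg : LogLip a g) (hc : 0 ≤ c) : LogLip a (fun x => c * g x) := fun x y =>
  calc c * g x ≤ c * (Real.exp (a * dist x y) * g y) := by gcongr; exact hg x y
    _ = Real.exp (a * dist x y) * (c * g y) := by ring

theorem of_lipschitzWith (hg : LipschitzWith K g) {ε : ℝ} (hε : 0 < ε) (hεg : ∀ x, ε ≤ g x) :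
    LogLip (K / ε) g := fun x y =>
  calc g x ≤ g y + K * dist x y := hg.le_add_mul x y
    _ = g y + K / ε * dist x y * ε := by field_simp
    _ ≤ g y + K / ε * dist x y * g y := by gcongr; exact hεg y
    _ = (K / ε * dist x y + 1) * g y := by ring
    _ ≤ Real.exp (K / ε * dist x y) * g y := by
      gcongr
      exacts [hε.le.trans (hεg y), Real.add_one_le_exp _]

theorem le_exp_mul (hg : LogLip a g) (ha : 0 ≤ a) (hg₀ : ∀ x, 0 ≤ g x) {x y : X}
    (hxy : dist x y ≤ 1) : g x ≤ Real.exp a * g y := by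
  refine (hg x y).trans ?_
  have := hg₀ y
  gcongr
  exact mul_le_of_le_one_right ha hxy

theorem sub_const (hg : LogLip a g) (ha : 0 ≤ a) (hab : a ≤ b) (hdist : ∀ x y : X, dist x y ≤ 1)
    (hlow : ∀ x, Real.exp (-b) ≤ g x) (hc₀ : 0 ≤ c)
    (hc : c * (b * Real.exp b) ≤ Real.exp (-b) * (b - a)) :
    LogLip b (fun x => g x - c) := fun x y => by
  set d := dist x y
  have hd : 0 ≤ d := dist_nonneg
  have hba : 0 ≤ (b - a) * d := mul_nonneg (sub_nonneg.2 hab) hd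
  have hgap : (b - a) * d ≤ Real.exp (b * d) - Real.exp (a * d) := by
    have hfactor : Real.exp (b * d) = Real.exp (a * d) * Real.exp ((b - a) * d) := by
      rw [← Real.exp_add]
      ring_nf
    have hone : 1 ≤ Real.exp (a * d) := Real.one_le_exp (by positivity)
    nlinarith [Real.add_one_le_exp ((b - a) * d)]
  have hloss : c * (Real.exp (b * d) - 1) ≤ g y * (Real.exp (b * d) - Real.exp (a * d)) :=
    calc c * (Real.exp (b * d) - 1) ≤ c * (b * Real.exp b * d) := by
          gcongr
          exact exp_mul_sub_one_le (ha.trans hab) hd (hdist x y)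
      _ = c * (b * Real.exp b) * d := by ring
      _ ≤ Real.exp (-b) * (b - a) * d := by gcongr
      _ = Real.exp (-b) * ((b - a) * d) := by ring
      _ ≤ g y * (Real.exp (b * d) - Real.exp (a * d)) := by
          gcongr
          · exact (Real.exp_pos _).le.trans (hlow y)
          · exact hlow y
  linarith [hg x y]

end LogLip

end Metric

/-! ### The circle and its densities -/

section Circle

theorem coe_circle_eq_iff {x y : ℝ} : (x : Circle1) = y ↔ ∃ n : ℤ, x = y + n := by
  rw [← sub_eq_zero, ← AddCircle.coe_sub, AddCircle.coe_eq_zero_iff]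
  refine exists_congr fun n => ?_
  rw [zsmul_one, eq_sub_iff_add_eq', eq_comm]

theorem exists_equivIco_coe_eq (x : ℝ) :
    ∃ n : ℤ, (AddCircle.equivIco 1 0 (x : Circle1) : ℝ) = x + n :=
  coe_circle_eq_iff.1 AddCircle.coe_equivIco

theorem dist_coe_circle (x y : ℝ) : dist (x : Circle1) y = |x - y - round (x - y)| := by
  rw [dist_eq_norm, ← AddCircle.coe_sub, UnitAddCircle.norm_eq]

theorem dist_coe_circle_le (x y : ℝ) : dist (x : Circle1) y ≤ |x - y| := by
  simpa [dist_coe_circle] using round_le (x - y) 0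

theorem dist_circle_le_half (x y : Circle1) : dist x y ≤ 1 / 2 := by
  simpa [dist_eq_norm] using AddCircle.norm_le_half_period (p := (1 : ℝ)) (x := x - y) one_ne_zero

theorem dist_circle_le_one (x y : Circle1) : dist x y ≤ 1 :=
  (dist_circle_le_half x y).trans (by norm_num)

theorem exists_lifts_abs_sub_eq_dist (x y : Circle1) :
    ∃ X Y : ℝ, (X : Circle1) = x ∧ (Y : Circle1) = y ∧ |X - Y| = dist x y := by
  obtain ⟨a, rfl⟩ := QuotientAddGroup.mk_surjective x
  obtain ⟨b, rfl⟩ := QuotientAddGroup.mk_surjective y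
  refine ⟨a, b + round (a - b), rfl, coe_circle_eq_iff.2 ⟨_, rfl⟩, ?_⟩
  rw [← sub_sub]
  exact (dist_coe_circle a b).symm

theorem integrable_circle_iff {g : Circle1 → ℝ} (t : ℝ) :
    Integrable g ↔ IntegrableOn (fun x : ℝ => g x) (Ioc t (t + 1)) := by
  refine ⟨fun h => (AddCircle.measurePreserving_mk 1 t).integrable_comp_of_integrable h,
    fun h => ?_⟩
  have hcoe : g = (fun x : ℝ => g x) ∘ Subtype.val ∘ AddCircle.equivIoc 1 t := by
    funext x
    simp
  rw [hcoe]
  exact ((measurePreserving_subtype_coe measurableSet_Ioc).comp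
    (AddCircle.measurePreserving_equivIoc 1)).integrable_comp_of_integrable h

theorem integral_const_circle (c : ℝ) : ∫ _ : Circle1, c = c := by
  simp [Measure.real]

theorem integrable_circle_of_continuous {f : Circle1 → ℝ} (hf : Continuous f) : Integrable f :=
  hf.integrable_of_hasCompactSupport (.of_compactSpace f)

end Circle

section L1

variable {f g h : Circle1 → ℝ}

theorem l1norm_sub_comm (f g : Circle1 → ℝ) : l1norm (f - g) = l1norm (g - f) := by
  simp only [l1norm, Pi.sub_apply, abs_sub_comm]

theorem l1norm_smul (c : ℝ) (f : Circle1 → ℝ) : l1norm (c • f) = |c| * l1norm f := by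
  simp only [l1norm, Pi.smul_apply, smul_eq_mul, abs_mul, integral_const_mul]

theorem l1norm_le_integral (hg : Integrable g) (hfg : ∀ x, |f x| ≤ g x) :
    l1norm f ≤ ∫ x, g x :=
  integral_mono_of_nonneg (.of_forall fun _ => abs_nonneg _) hg (.of_forall hfg)

theorem l1norm_sub_le (hf : Integrable f) (hg : Integrable g) (hh : Integrable h) :
    l1norm (f - h) ≤ l1norm (f - g) + l1norm (g - h) := by
  unfold l1norm
  rw [← integral_add (hf.sub hg).abs (hg.sub hh).abs]
  exact integral_mono (hf.sub hh).abs ((hf.sub hg).abs.add (hg.sub hh).abs)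
    fun x => abs_sub_le _ _ _

theorem l1norm_le_of_forall_abs_le {c : ℝ} (hc : ∀ x, |f x| ≤ c) : l1norm f ≤ c := by
  simpa only [integral_const_circle] using l1norm_le_integral (integrable_const c) hc

end L1

namespace IsProbDensity

variable {f g : Circle1 → ℝ}

theorem integrable (hf : IsProbDensity f) : Integrable f := hf.1

theorem integral_eq_one (hf : IsProbDensity f) : ∫ x, f x = 1 := hf.2.1

theorem nonneg (hf : IsProbDensity f) (x : Circle1) : 0 ≤ f x := hf.2.2 x

theorem l1norm_sub_le_mul_two (hf : IsProbDensity f) (hg : IsProbDensity g) {c : ℝ}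
    (h : ∀ x, |f x - g x| ≤ c * (f x + g x)) : l1norm (f - g) ≤ c * 2 := by
  have hint := l1norm_le_integral
    ((hf.integrable.add hg.integrable).const_mul c) h
  have hsum : ∫ x, (f + g) x = 2 := by
    rw [integral_add' hf.integrable hg.integrable, hf.integral_eq_one, hg.integral_eq_one]
    norm_num
  rwa [integral_const_mul, hsum] at hint

theorem l1norm_sub_le_two (hf : IsProbDensity f) (hg : IsProbDensity g) : l1norm (f - g) ≤ 2 := by
  simpa using hf.l1norm_sub_le_mul_two hg (c := 1) fun x => by
    rw [one_mul, abs_le]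
    constructor <;> linarith [hf.nonneg x, hg.nonneg x]

end IsProbDensity

/-! ### Lifts and transfer operators -/

namespace CM

variable {lam Astar : ℝ}

section Lift

theorem differentiable_lift (T : CM lam Astar) : Differentiable ℝ T.F :=
  T.contDiff.differentiable two_ne_zero

theorem differentiable_deriv_lift (T : CM lam Astar) : Differentiable ℝ (deriv T.F) := by
  have h : ContDiff ℝ (1 + 1) T.F := by simpa [one_add_one_eq_two] using T.contDiff
  exact (contDiff_succ_iff_deriv.1 h).2.2.differentiable one_ne_zero

theorem Astar_nonneg (T : CM lam Astar) : 0 ≤ Astar := (abs_nonneg _).trans (T.second_bound 0)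

theorem abs_deriv_lift_sub_le (T : CM lam Astar) (x y : ℝ) :
    |deriv T.F x - deriv T.F y| ≤ Astar * |x - y| :=
  convex_univ.norm_image_sub_le_of_norm_deriv_le (fun z _ => T.differentiable_deriv_lift z)
    (fun z _ => T.second_bound z) (mem_univ y) (mem_univ x)

theorem lift_add_intCast (T : CM lam Astar) (x : ℝ) (n : ℤ) : T.F (x + n) = T.F x + n * T.deg := by
  induction n using Int.induction_on with
  | zero => simp
  | succ i ih =>
    have h := T.lift_add_one (x + i)
    push_cast at *
    rw [← add_assoc, h, ih]
    ring
  | pred i ih =>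
    have h := T.lift_add_one (x + (-i - 1))
    push_cast at *
    rw [show x + (-i - 1) + 1 = x + -(i : ℝ) by ring, ih] at h
    linarith

theorem deriv_lift_add_intCast (T : CM lam Astar) (x : ℝ) (n : ℤ) :
    deriv T.F (x + n) = deriv T.F x := by
  rw [← deriv_comp_add_const, funext fun y => T.lift_add_intCast y n, deriv_add_const]

theorem toMap_coe (T : CM lam Astar) (x : ℝ) : T.toMap x = (T.F x : Circle1) := by
  obtain ⟨n, hn⟩ := exists_equivIco_coe_eq x
  rw [toMap, hn, lift_add_intCast, coe_circle_eq_iff]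
  exact ⟨n * T.deg, by push_cast; ring⟩

theorem dmap_coe (T : CM lam Astar) (x : ℝ) : T.dmap x = deriv T.F x := by
  obtain ⟨n, hn⟩ := exists_equivIco_coe_eq x
  rw [dmap, hn, deriv_lift_add_intCast]

theorem measurable_toMap (T : CM lam Astar) : Measurable T.toMap :=
  AddCircle.measurable_mk'.comp <| T.differentiable_lift.continuous.measurable.comp <|
    measurable_subtype_coe.comp (AddCircle.measurableEquivIco 1 0).measurable

theorem mul_sub_le_lift_sub (T : CM lam Astar) {x y : ℝ} (hxy : x ≤ y) :
    lam * (y - x) ≤ T.F y - T.F x :=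
  convex_univ.mul_sub_le_image_sub_of_le_deriv T.differentiable_lift.continuous.continuousOn
    T.differentiable_lift.differentiableOn (fun z _ => T.expanding z) x (mem_univ _) y (mem_univ _)
    hxy

theorem mul_abs_sub_le_abs_lift_sub (T : CM lam Astar) (x y : ℝ) :
    lam * |x - y| ≤ |T.F x - T.F y| := by
  wlog hxy : y ≤ x generalizing x y
  · rw [abs_sub_comm x, abs_sub_comm (T.F x)]
    exact this y x (le_of_not_ge hxy)
  rw [abs_of_nonneg (sub_nonneg.2 hxy)]
  exact (T.mul_sub_le_lift_sub hxy).trans (le_abs_self _)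

end Lift

section InverseLift

variable (hlam : 0 < lam) (T : CM lam Astar)

include hlam

theorem deriv_lift_pos (x : ℝ) : 0 < deriv T.F x := hlam.trans_le (T.expanding x)

theorem strictMono_lift : StrictMono T.F := strictMono_of_deriv_pos (T.deriv_lift_pos hlam)

theorem surjective_lift : Function.Surjective T.F := by
  refine T.differentiable_lift.continuous.surjective
    (tendsto_atTop_mono' atTop (f₁ := fun x => T.F 0 + lam * x) ?_
      (tendsto_atTop_add_const_left _ _ (tendsto_id.const_mul_atTop hlam)))
    (tendsto_atBot_mono' atBot (f₁ := fun x => T.F 0 + lam * x) ?_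
      (tendsto_atBot_add_const_left _ _ (tendsto_id.const_mul_atBot hlam)))
  · filter_upwards [eventually_ge_atTop 0] with x hx
    linarith [T.mul_sub_le_lift_sub hx]
  · filter_upwards [eventually_le_atBot 0] with x hx
    linarith [T.mul_sub_le_lift_sub hx]

theorem image_lift_Ioc (x y : ℝ) : T.F '' Ioc x y = Ioc (T.F x) (T.F y) :=
  ((T.strictMono_lift hlam).orderIsoOfSurjective T.F (T.surjective_lift hlam)).image_Ioc x y

theorem deg_pos : 0 < T.deg := by
  have h := T.strictMono_lift hlam (lt_add_one 0)
  rw [T.lift_add_one, lt_add_iff_pos_right] at h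
  exact_mod_cast h

theorem toNat_deg_cast : (T.deg.toNat : ℤ) = T.deg := Int.toNat_of_nonneg (T.deg_pos hlam).le

theorem toNat_deg_cast_real : (T.deg.toNat : ℝ) = T.deg := by
  exact_mod_cast congrArg (Int.cast (R := ℝ)) (T.toNat_deg_cast hlam)

omit hlam in
/-- The inverse of the lift of `T`; its translates parametrize the inverse branches of `T`. It
takes junk values unless `0 < lam`, which makes the lift bijective. -/
noncomputable def invLift : ℝ → ℝ := Function.invFun T.F

theorem lift_invLift (u : ℝ) : T.F (T.invLift u) = u :=
  Function.rightInverse_invFun (T.surjective_lift hlam) u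

theorem invLift_lift (x : ℝ) : T.invLift (T.F x) = x :=
  Function.leftInverse_invFun (T.strictMono_lift hlam).injective x

theorem invLift_add_mul_deg (u : ℝ) (n : ℤ) : T.invLift (u + n * T.deg) = T.invLift u + n := by
  rw [← T.invLift_lift hlam (T.invLift u + n), lift_add_intCast, T.lift_invLift hlam]

theorem coe_invLift_eq_iff (u v : ℝ) :
    (T.invLift u : Circle1) = T.invLift v ↔ ∃ n : ℤ, u = v + n * T.deg := by
  refine coe_circle_eq_iff.trans (exists_congr fun n => ?_)
  rw [← T.invLift_add_mul_deg hlam]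
  exact (Function.LeftInverse.injective (T.lift_invLift hlam)).eq_iff

theorem toMap_invLift_add_natCast (X : ℝ) (i : ℕ) : T.toMap (T.invLift (X + i)) = X := by
  rw [toMap_coe, T.lift_invLift hlam, coe_circle_eq_iff]
  exact ⟨i, by simp⟩

theorem injective_coe_invLift_add (X : ℝ) :
    Function.Injective fun i : Fin T.deg.toNat => (T.invLift (X + (i : ℕ)) : Circle1) := by
  intro i j hij
  obtain ⟨n, hn⟩ := (T.coe_invLift_eq_iff hlam _ _).1 hij
  have hdiff : ((i : ℕ) : ℤ) - (j : ℕ) = n * T.deg := by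
    have : ((i : ℕ) : ℝ) - (j : ℕ) = n * T.deg := by linarith
    exact_mod_cast this
  have hlt : |((i : ℕ) : ℤ) - (j : ℕ)| < T.deg := by
    rw [abs_lt]
    omega
  have hzero := Int.eq_zero_of_abs_lt_dvd ⟨n, by rw [hdiff, mul_comm]⟩ hlt
  exact Fin.ext (by omega)

theorem exists_coe_invLift_add_eq {X : ℝ} {y : Circle1} (hy : T.toMap y = X) :
    ∃ i : Fin T.deg.toNat, (T.invLift (X + (i : ℕ)) : Circle1) = y := by
  obtain ⟨Y, rfl⟩ := QuotientAddGroup.mk_surjective y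
  obtain ⟨q, hq⟩ := coe_circle_eq_iff.1 ((T.toMap_coe Y).symm.trans hy)
  have hr₀ := Int.emod_nonneg q (T.deg_pos hlam).ne'
  have hr₁ := Int.emod_lt_of_pos q (T.deg_pos hlam)
  have hr : (((q % T.deg).toNat : ℕ) : ℝ) = (q : ℝ) - (q / T.deg : ℤ) * T.deg := by
    have hZ : (((q % T.deg).toNat : ℕ) : ℤ) = q - q / T.deg * T.deg := by
      rw [Int.toNat_of_nonneg hr₀, Int.emod_def, mul_comm]
    exact_mod_cast congrArg (Int.cast (R := ℝ)) hZ
  refine ⟨⟨(q % T.deg).toNat, by omega⟩, ?_⟩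
  rw [← T.invLift_lift hlam Y, hq]
  refine (T.coe_invLift_eq_iff hlam _ _).2 ⟨-(q / T.deg), ?_⟩
  rw [hr]
  push_cast
  ring

/-- The preimages of the class of `X` under `T`, enumerated by the translates `X, …, X + deg - 1`
of `X`. -/
noncomputable def fiberEquiv (X : ℝ) : Fin T.deg.toNat ≃ {y : Circle1 // T.toMap y = X} :=
  Equiv.ofBijective (fun i => ⟨T.invLift (X + (i : ℕ)), T.toMap_invLift_add_natCast hlam X i⟩)
    ⟨fun _ _ hij => T.injective_coe_invLift_add hlam X (congrArg Subtype.val hij),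
      fun y => (T.exists_coe_invLift_add_eq hlam y.2).imp fun _ hi => Subtype.ext hi⟩

end InverseLift

end CM

section Transfer

variable {lam Astar : ℝ} (hlam : 0 < lam) (T : CM lam Astar) {g h : Circle1 → ℝ}

/-- The term of `ℒ_T g` at the class of `u` that comes from the inverse branch `T.invLift`. -/
noncomputable def branchTerm (g : Circle1 → ℝ) (u : ℝ) : ℝ :=
  g (T.invLift u) / deriv T.F (T.invLift u)

include hlam

theorem transfer_coe (g : Circle1 → ℝ) (X : ℝ) :
    transfer T g X = ∑ i ∈ Finset.range T.deg.toNat, branchTerm T g (X + i) := by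
  rw [transfer, ← (T.fiberEquiv hlam X).tsum_eq, tsum_fintype, Finset.sum_range]
  refine Finset.sum_congr rfl fun i _ => ?_
  rw [branchTerm, ← T.dmap_coe]
  rfl

theorem transfer_sub (g h : Circle1 → ℝ) :
    transfer T (g - h) = transfer T g - transfer T h := by
  funext x
  obtain ⟨X, rfl⟩ := QuotientAddGroup.mk_surjective x
  rw [Pi.sub_apply, transfer_coe hlam, transfer_coe hlam, transfer_coe hlam,
    ← Finset.sum_sub_distrib]
  exact Finset.sum_congr rfl fun i _ => sub_div _ _ _

omit hlam in
theorem transfer_smul (c : ℝ) (g : Circle1 → ℝ) : transfer T (c • g) = c • transfer T g := by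
  funext x
  simp only [transfer, Pi.smul_apply, smul_eq_mul, mul_div_assoc, tsum_mul_left]

theorem abs_transfer_le (g : Circle1 → ℝ) (x : Circle1) :
    |transfer T g x| ≤ transfer T (fun y => |g y|) x := by
  obtain ⟨X, rfl⟩ := QuotientAddGroup.mk_surjective x
  rw [transfer_coe hlam, transfer_coe hlam]
  refine (Finset.abs_sum_le_sum_abs _ _).trans_eq (Finset.sum_congr rfl fun i _ => ?_)
  rw [branchTerm, branchTerm, abs_div, abs_of_pos (T.deriv_lift_pos hlam _)]

theorem transfer_nonneg (hg : ∀ x, 0 ≤ g x) (x : Circle1) : 0 ≤ transfer T g x := by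
  simpa only [abs_of_nonneg (hg _)] using (abs_nonneg _).trans (abs_transfer_le hlam T g x)

omit hlam in
theorem transfer_comp_mul (φ g : Circle1 → ℝ) :
    transfer T ((φ ∘ T.toMap) * g) = φ * transfer T g := by
  funext x
  rw [Pi.mul_apply, transfer, transfer, ← tsum_mul_left]
  refine tsum_congr fun y => ?_
  rw [Pi.mul_apply, Function.comp_apply, y.2, mul_div_assoc]

end Transfer

section TransferIntegral

variable {lam Astar : ℝ} (hlam : 0 < lam) (T : CM lam Astar) {g h : Circle1 → ℝ}

include hlam

theorem abs_deriv_smul_branchTerm_lift (g : Circle1 → ℝ) (x : ℝ) :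
    |deriv T.F x| • branchTerm T g (T.F x) = g x := by
  have hpos := T.deriv_lift_pos hlam x
  rw [branchTerm, T.invLift_lift hlam, abs_of_pos hpos, smul_eq_mul, mul_div_cancel₀ _ hpos.ne']

theorem image_lift_Ioc_eq_Ioc_deg :
    T.F '' Ioc (T.invLift 0) (T.invLift 0 + 1) = Ioc (0 : ℝ) T.deg.toNat := by
  rw [T.image_lift_Ioc hlam, T.lift_add_one, T.lift_invLift hlam, T.toNat_deg_cast_real hlam,
    zero_add]

theorem intervalIntegrable_branchTerm (hg : Integrable g) :
    IntervalIntegrable (branchTerm T g) volume 0 T.deg.toNat := by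
  rw [intervalIntegrable_iff_integrableOn_Ioc_of_le (Nat.cast_nonneg _),
    ← image_lift_Ioc_eq_Ioc_deg hlam, integrableOn_image_iff_integrableOn_abs_deriv_smul
      measurableSet_Ioc (fun x _ => (T.differentiable_lift x).hasDerivAt.hasDerivWithinAt)
      (T.strictMono_lift hlam).injective.injOn]
  simp only [abs_deriv_smul_branchTerm_lift hlam]
  exact (integrable_circle_iff _).1 hg

theorem intervalIntegral_branchTerm (g : Circle1 → ℝ) :
    ∫ u in (0 : ℝ)..T.deg.toNat, branchTerm T g u = ∫ x, g x := by
  rw [intervalIntegral.integral_of_le (Nat.cast_nonneg _), ← image_lift_Ioc_eq_Ioc_deg hlam,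
    integral_image_eq_integral_abs_deriv_smul measurableSet_Ioc
      (fun x _ => (T.differentiable_lift x).hasDerivAt.hasDerivWithinAt)
      (T.strictMono_lift hlam).injective.injOn]
  simp only [abs_deriv_smul_branchTerm_lift hlam]
  exact AddCircle.integral_preimage 1 _ g

theorem integrable_transfer (hg : Integrable g) : Integrable (transfer T g) := by
  rw [integrable_circle_iff 0, ← intervalIntegrable_iff_integrableOn_Ioc_of_le (by simp), zero_add]
  simp only [transfer_coe hlam]
  simpa only [Finset.sum_fn] using IntervalIntegrable.sum (Finset.range T.deg.toNat) fun i hi =>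
    intervalIntegrable_comp_add_natCast (intervalIntegrable_branchTerm hlam T hg)
      (Finset.mem_range.1 hi)

theorem integral_transfer (hg : Integrable g) : ∫ x, transfer T g x = ∫ x, g x := by
  rw [← AddCircle.intervalIntegral_preimage 1 0, zero_add, ← intervalIntegral_branchTerm hlam T g,
    ← intervalIntegral_sum_comp_add_natCast (intervalIntegrable_branchTerm hlam T hg)]
  simp only [transfer_coe hlam]

theorem IsProbDensity.transfer (hg : IsProbDensity g) : IsProbDensity (transfer T g) :=
  ⟨integrable_transfer hlam T hg.integrable,
    (integral_transfer hlam T hg.integrable).trans hg.integral_eq_one,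
    transfer_nonneg hlam T hg.nonneg⟩

theorem l1norm_transfer_le (hg : Integrable g) : l1norm (transfer T g) ≤ l1norm g := by
  rw [l1norm, l1norm, ← integral_transfer hlam T hg.abs]
  exact l1norm_le_integral (integrable_transfer hlam T hg.abs) (abs_transfer_le hlam T g)

theorem l1norm_transfer_sub_transfer_le (hg : Integrable g) (hh : Integrable h) :
    l1norm (transfer T g - transfer T h) ≤ l1norm (g - h) := by
  rw [← transfer_sub hlam]
  exact l1norm_transfer_le hlam T (hg.sub hh)

theorem setIntegral_transfer (hg : Integrable g) {B : Set Circle1} (hB : MeasurableSet B) :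
    ∫ x in B, transfer T g x = ∫ x in T.toMap ⁻¹' B, g x := by
  have hTB : MeasurableSet (T.toMap ⁻¹' B) := T.measurable_toMap hB
  have hdual : transfer T ((T.toMap ⁻¹' B).indicator g) = B.indicator (transfer T g) := by
    have hind : ∀ (S : Set Circle1) (f : Circle1 → ℝ), S.indicator 1 * f = S.indicator f :=
      fun S f => by
        funext x
        simpa using (indicator_mul_left S 1 f (i := x)).symm
    rw [← hind _ g, ← hind _ (transfer T g), ← transfer_comp_mul]
    rfl
  rw [← integral_indicator hB, ← integral_indicator hTB, ← hdual,
    integral_transfer hlam T (hg.indicator hTB)]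

variable {T} in
theorem IsSRBDensity.transfer_ae_eq {r : Circle1 → ℝ} (hr : IsSRBDensity T r) :
    transfer T r =ᵐ[volume] r := by
  obtain ⟨hdens, -, hinv⟩ := hr
  refine Integrable.ae_eq_of_forall_setIntegral_eq _ _
    (integrable_transfer hlam T hdens.integrable) hdens.integrable fun B hB _ => ?_
  have hTB : MeasurableSet (T.toMap ⁻¹' B) := T.measurable_toMap hB
  have hmass := congrArg (· B) hinv
  simp only [Measure.map_apply T.measurable_toMap hB, withDensity_apply _ hB,
    withDensity_apply _ hTB] at hmass
  have hset : ∀ S : Set Circle1,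
      ∫ x in S, r x = (∫⁻ x in S, ENNReal.ofReal (r x)).toReal := fun S =>
    integral_eq_lintegral_of_nonneg_ae (.of_forall hdens.nonneg)
      hdens.integrable.aestronglyMeasurable.restrict
  rw [setIntegral_transfer hlam T hdens.integrable hB, hset, hset, hmass]

end TransferIntegral

section TransferIter

variable {lam Astar : ℝ} {Ts : ℕ → CM lam Astar} {g h : Circle1 → ℝ}

theorem arrTransfer_eq_transferIter (Tarr : ℕ → ℕ → CM lam Astar) (n k : ℕ) (h : Circle1 → ℝ) :
    arrTransfer Tarr n k h = transferIter (Tarr n) k h := by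
  induction k with
  | zero => rfl
  | succ k ih => rw [arrTransfer, transferIter, ih]

theorem transferIter_add (Ts : ℕ → CM lam Astar) (j m : ℕ) (h : Circle1 → ℝ) :
    transferIter Ts (j + m) h = transferIter (fun i => Ts (j + i)) m (transferIter Ts j h) := by
  induction m with
  | zero => rfl
  | succ m ih => rw [← add_assoc, transferIter, transferIter, ih, add_assoc]

theorem IsProbDensity.transferIter (hlam : 0 < lam) (hg : IsProbDensity g) (k : ℕ) :
    IsProbDensity (transferIter Ts k g) := by
  induction k with
  | zero => exact hg
  | succ k ih => exact ih.transfer hlam _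

theorem integrable_transferIter (hlam : 0 < lam) (hg : Integrable g) (k : ℕ) :
    Integrable (transferIter Ts k g) := by
  induction k with
  | zero => exact hg
  | succ k ih => exact integrable_transfer hlam _ ih

theorem l1norm_transferIter_sub_le (hlam : 0 < lam) (hg : Integrable g) (hh : Integrable h)
    (k : ℕ) : l1norm (transferIter Ts k g - transferIter Ts k h) ≤ l1norm (g - h) := by
  induction k with
  | zero => rfl
  | succ k ih =>
    exact (l1norm_transfer_sub_transfer_le hlam _ (integrable_transferIter hlam hg k)
      (integrable_transferIter hlam hh k)).trans ih

theorem IsSRBDensity.l1norm_transferIter_sub_le (hlam : 0 < lam) {T : CM lam Astar}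
    {r : Circle1 → ℝ} (hr : IsSRBDensity T r) (hg : Integrable g) (k : ℕ) :
    l1norm (transferIter (fun _ => T) k g - r) ≤ l1norm (g - r) := by
  induction k with
  | zero => rfl
  | succ k ih =>
    have hfixed : l1norm (transferIter (fun _ => T) (k + 1) g - r) =
        l1norm (transfer T (transferIter (fun _ => T) k g) - transfer T r) := by
      refine integral_congr_ae ?_
      filter_upwards [hr.transfer_ae_eq hlam] with x hx
      rw [Pi.sub_apply, Pi.sub_apply, hx, transferIter]
    rw [hfixed]
    exact (l1norm_transfer_sub_transfer_le hlam T (integrable_transferIter hlam hg k)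
      hr.1.integrable).trans ih

end TransferIter

/-! ### Dependence on the map -/

section C1Distance

variable {lam Astar : ℝ} (T₁ T₂ T₃ : CM lam Astar)

theorem CM.abs_dmap_le (T : CM lam Astar) (x : Circle1) :
    |T.dmap x| ≤ |deriv T.F 0| + Astar := by
  set y : ℝ := (AddCircle.equivIco 1 0 x).1
  have hy : y ∈ Ico (0 : ℝ) (0 + 1) := (AddCircle.equivIco 1 0 x).2
  have hy₁ : |y - 0| ≤ 1 := by
    rw [sub_zero, abs_of_nonneg hy.1]
    linarith [hy.2]
  have hlip := (abs_sub_abs_le_abs_sub _ _).trans (T.abs_deriv_lift_sub_le y 0)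
  have hA := mul_le_of_le_one_right T.Astar_nonneg hy₁
  change |deriv T.F y| ≤ _
  linarith

theorem bddAbove_range_dist_toMap :
    BddAbove (range fun x => dist (T₁.toMap x) (T₂.toMap x)) :=
  ⟨1 / 2, forall_mem_range.2 fun _ => dist_circle_le_half _ _⟩

theorem bddAbove_range_abs_dmap_sub :
    BddAbove (range fun x => |T₁.dmap x - T₂.dmap x|) :=
  ⟨_, forall_mem_range.2 fun x =>
    (abs_sub _ _).trans (add_le_add (T₁.abs_dmap_le x) (T₂.abs_dmap_le x))⟩

theorem dist_toMap_le_dC1 (x : Circle1) : dist (T₁.toMap x) (T₂.toMap x) ≤ dC1 T₁ T₂ :=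
  (le_ciSup (bddAbove_range_dist_toMap T₁ T₂) x).trans <|
    le_add_of_nonneg_right (Real.iSup_nonneg fun _ => abs_nonneg _)

theorem abs_dmap_sub_le_dC1 (x : Circle1) : |T₁.dmap x - T₂.dmap x| ≤ dC1 T₁ T₂ :=
  (le_ciSup (bddAbove_range_abs_dmap_sub T₁ T₂) x).trans <|
    le_add_of_nonneg_left (Real.iSup_nonneg fun _ => dist_nonneg)

theorem dC1_nonneg : 0 ≤ dC1 T₁ T₂ := dist_nonneg.trans (dist_toMap_le_dC1 T₁ T₂ 0)

theorem dC1_self (T : CM lam Astar) : dC1 T T = 0 := by simp [dC1]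

theorem dC1_comm : dC1 T₁ T₂ = dC1 T₂ T₁ := by simp only [dC1, dist_comm, abs_sub_comm]

theorem dC1_triangle : dC1 T₁ T₃ ≤ dC1 T₁ T₂ + dC1 T₂ T₃ := by
  rw [dC1, dC1, dC1, add_add_add_comm]
  refine add_le_add (ciSup_le fun x => ?_) (ciSup_le fun x => ?_)
  · exact (dist_triangle _ _ _).trans <| add_le_add
      (le_ciSup (bddAbove_range_dist_toMap T₁ T₂) x) (le_ciSup (bddAbove_range_dist_toMap T₂ T₃) x)
  · exact (abs_sub_le _ _ _).trans <| add_le_add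
      (le_ciSup (bddAbove_range_abs_dmap_sub T₁ T₂) x)
      (le_ciSup (bddAbove_range_abs_dmap_sub T₂ T₃) x)

theorem abs_deriv_lift_sub_le_dC1 (x : ℝ) : |deriv T₁.F x - deriv T₂.F x| ≤ dC1 T₁ T₂ := by
  simpa only [CM.dmap_coe] using abs_dmap_sub_le_dC1 T₁ T₂ x

variable {T₁ T₂}

theorem exists_int_abs_lift_sub_le_dC1 (hδ : dC1 T₁ T₂ < 1 / 2) :
    ∃ p : ℤ, ∀ x, |T₁.F x - T₂.F x - p| ≤ dC1 T₁ T₂ := by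
  refine exists_int_forall_abs_sub_le
    (T₁.differentiable_lift.continuous.sub T₂.differentiable_lift.continuous) hδ fun x => ?_
  rw [Pi.sub_apply, ← dist_coe_circle, ← CM.toMap_coe, ← CM.toMap_coe]
  exact dist_toMap_le_dC1 T₁ T₂ x

theorem deg_eq_of_dC1_lt_half (hδ : dC1 T₁ T₂ < 1 / 2) : T₁.deg = T₂.deg := by
  obtain ⟨p, hp⟩ := exists_int_abs_lift_sub_le_dC1 hδ
  refine eq_of_abs_intCast_sub_lt_one ?_
  have h₀ := abs_le.1 (hp 0)
  have h₁ := abs_le.1 (hp (0 + 1))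
  rw [T₁.lift_add_one, T₂.lift_add_one] at h₁
  rw [abs_lt]
  constructor <;> linarith

theorem abs_invLift_sub_invLift_le (hlam : 0 < lam) {p δ : ℝ}
    (hp : ∀ x, |T₁.F x - T₂.F x - p| ≤ δ) (u v : ℝ) :
    |T₁.invLift u - T₂.invLift v| ≤ (δ + |u - p - v|) / lam := by
  have hexp := T₂.mul_abs_sub_le_abs_lift_sub (T₁.invLift u) (T₂.invLift v)
  have hp' := hp (T₁.invLift u)
  rw [T₂.lift_invLift hlam] at hexp
  rw [T₁.lift_invLift hlam, abs_sub_comm] at hp'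
  rw [le_div_iff₀' hlam]
  calc lam * |T₁.invLift u - T₂.invLift v| ≤ |T₂.F (T₁.invLift u) - v| := hexp
    _ = |(p - (u - T₂.F (T₁.invLift u))) + (u - p - v)| := by ring_nf
    _ ≤ δ + |u - p - v| := (abs_add_le _ _).trans (by gcongr)

theorem deriv_lift_le_exp_mul_deriv_lift (hlam : 0 < lam) {x₁ x₂ s : ℝ} (hs : |x₁ - x₂| ≤ s) :
    deriv T₂.F x₂ ≤ Real.exp ((Astar * s + dC1 T₁ T₂) / lam) * deriv T₁.F x₁ := by
  set q := (Astar * s + dC1 T₁ T₂) / lam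
  have hA : 0 ≤ Astar := T₁.Astar_nonneg
  have hq : 0 ≤ q :=
    div_nonneg (add_nonneg (mul_nonneg hA ((abs_nonneg _).trans hs)) (dC1_nonneg _ _)) hlam.le
  have hdiff : deriv T₂.F x₂ - deriv T₁.F x₁ ≤ q * lam := by
    have hlip := (le_abs_self _).trans (T₂.abs_deriv_lift_sub_le x₂ x₁)
    have hclose := (neg_abs_le _).trans' (neg_le_neg (abs_deriv_lift_sub_le_dC1 T₁ T₂ x₁))
    have hs' : Astar * |x₂ - x₁| ≤ Astar * s := by
      rw [abs_sub_comm]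
      gcongr
    rw [div_mul_cancel₀ _ hlam.ne']
    linarith
  have hexpand := mul_le_mul_of_nonneg_left (T₁.expanding x₁) hq
  calc deriv T₂.F x₂ ≤ (q + 1) * deriv T₁.F x₁ := by linarith
    _ ≤ Real.exp q * deriv T₁.F x₁ := by
      gcongr
      exacts [(T₁.deriv_lift_pos hlam x₁).le, Real.add_one_le_exp q]

variable {a : ℝ} {g : Circle1 → ℝ}

theorem branchTerm_le_exp_mul_branchTerm (hlam : 0 < lam) (ha : 0 ≤ a) (hg₀ : ∀ x, 0 ≤ g x)
    (hg : LogLip a g) {p : ℝ} (hp : ∀ x, |T₁.F x - T₂.F x - p| ≤ dC1 T₁ T₂) (u v : ℝ) :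
    branchTerm T₁ g u ≤
      Real.exp (((a + Astar / lam) * (dC1 T₁ T₂ + |u - p - v|) + dC1 T₁ T₂) / lam) *
        branchTerm T₂ g v := by
  set δ := dC1 T₁ T₂
  set s := (δ + |u - p - v|) / lam with hs
  set x₁ := T₁.invLift u
  set x₂ := T₂.invLift v
  have hx : |x₁ - x₂| ≤ s := abs_invLift_sub_invLift_le hlam hp u v
  have hval : g x₁ ≤ Real.exp (a * s) * g x₂ := (hg x₁ x₂).trans <| by
    have := hg₀ x₂
    gcongr
    exact (dist_coe_circle_le x₁ x₂).trans hx
  have hexponent : ((a + Astar / lam) * (δ + |u - p - v|) + δ) / lam =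
      a * s + (Astar * s + δ) / lam := by
    rw [hs]
    field_simp
    ring
  rw [hexponent, Real.exp_add, branchTerm, branchTerm, ← mul_div_assoc,
    div_le_div_iff₀ (T₁.deriv_lift_pos hlam x₁) (T₂.deriv_lift_pos hlam x₂)]
  calc g x₁ * deriv T₂.F x₂
      ≤ (Real.exp (a * s) * g x₂) * (Real.exp ((Astar * s + δ) / lam) * deriv T₁.F x₁) :=
        mul_le_mul hval (deriv_lift_le_exp_mul_deriv_lift hlam hx)
          (T₂.deriv_lift_pos hlam x₂).le (mul_nonneg (Real.exp_pos _).le (hg₀ x₂))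
    _ = Real.exp (a * s) * Real.exp ((Astar * s + δ) / lam) * g x₂ * deriv T₁.F x₁ := by ring

theorem transfer_le_exp_mul_transfer (hlam : 0 < lam) (hδ : dC1 T₁ T₂ < 1 / 2) (ha : 0 ≤ a)
    (hg₀ : ∀ x, 0 ≤ g x) (hg : LogLip a g) (x y : Circle1) :
    transfer T₁ g x ≤
      Real.exp (((a + Astar / lam) * (dC1 T₁ T₂ + dist x y) + dC1 T₁ T₂) / lam) *
        transfer T₂ g y := by
  obtain ⟨p, hp⟩ := exists_int_abs_lift_sub_le_dC1 hδ
  obtain ⟨X, Y, rfl, rfl, hXY⟩ := exists_lifts_abs_sub_eq_dist x y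
  have hY : (Y : Circle1) = (Y - p : ℝ) := coe_circle_eq_iff.2 ⟨p, by ring⟩
  rw [← hXY, hY, transfer_coe hlam, transfer_coe hlam, deg_eq_of_dC1_lt_half hδ, Finset.mul_sum]
  refine Finset.sum_le_sum fun i _ => ?_
  have hshift : X + i - p - (Y - p + i) = X - Y := by ring
  simpa only [hshift] using
    branchTerm_le_exp_mul_branchTerm hlam ha hg₀ hg hp (X + i) (Y - p + i)

theorem LogLip.transfer (hlam : 0 < lam) (T : CM lam Astar) (ha : 0 ≤ a) (hg₀ : ∀ x, 0 ≤ g x)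
    (hg : LogLip a g) : LogLip ((a + Astar / lam) / lam) (transfer T g) := fun x y => by
  have h := transfer_le_exp_mul_transfer (T₁ := T) (T₂ := T) hlam (by norm_num [dC1_self]) ha
    hg₀ hg x y
  rwa [dC1_self, zero_add, add_zero, mul_div_right_comm] at h

end C1Distance

/-- The cone of probability densities that are log-Lipschitz with constant `a`, which replaces the
class `memD`: functions in it are continuous on the whole circle. -/
structure IsLogLipDensity (a : ℝ) (g : Circle1 → ℝ) : Prop where
  isProbDensity : IsProbDensity g
  logLip : LogLip a g

namespace IsLogLipDensity

variable {a b : ℝ} {g : Circle1 → ℝ}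

theorem mono (hg : IsLogLipDensity a g) (hab : a ≤ b) : IsLogLipDensity b g :=
  ⟨hg.isProbDensity, hg.logLip.mono hab hg.isProbDensity.nonneg⟩

theorem exp_neg_le (hg : IsLogLipDensity a g) (ha : 0 ≤ a) (x : Circle1) :
    Real.exp (-a) ≤ g x := by
  have hint : ∫ y, g y ≤ ∫ _ : Circle1, Real.exp a * g x :=
    integral_mono hg.isProbDensity.integrable (integrable_const _) fun y =>
      hg.logLip.le_exp_mul ha hg.isProbDensity.nonneg (dist_circle_le_one y x)
  rw [hg.isProbDensity.integral_eq_one, integral_const_circle] at hint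
  rwa [Real.exp_neg, inv_le_iff_one_le_mul₀' (Real.exp_pos a)]

theorem exists_eq_mul_add_const (ha : 0 ≤ a) (hab : a < b) :
    ∃ θ ∈ Ioo (0 : ℝ) 1, ∀ g, IsLogLipDensity a g →
      ∃ g', IsLogLipDensity b g' ∧ ∀ x, g x = θ * g' x + (1 - θ) := by
  have hb : 0 < b := ha.trans_lt hab
  have : 0 < b - a := sub_pos.2 hab
  obtain ⟨c, hc⟩ : ∃ c, c = Real.exp (-b) * (b - a) / (b * Real.exp b) := ⟨_, rfl⟩
  have hc₀ : 0 < c := hc ▸ by positivity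
  have hc_mul : c * (b * Real.exp b) = Real.exp (-b) * (b - a) := by
    rw [hc, div_mul_cancel₀ _ (by positivity)]
  have hc_exp : c ≤ Real.exp (-b) := by
    rw [hc, div_le_iff₀ (by positivity)]
    gcongr
    exact (sub_le_self b ha).trans (le_mul_of_one_le_right hb.le (Real.one_le_exp hb.le))
  have hc₁ : c < 1 := hc_exp.trans_lt (Real.exp_lt_one_iff.2 (neg_lt_zero.2 hb))
  have hθ : 0 < 1 - c := sub_pos.2 hc₁
  refine ⟨1 - c, ⟨hθ, by linarith⟩, fun g hg => ⟨fun x => (1 - c)⁻¹ * (g x - c), ⟨⟨?_, ?_, ?_⟩, ?_⟩,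
    fun x => by field_simp; ring⟩⟩
  · exact (hg.isProbDensity.integrable.sub (integrable_const c)).const_mul _
  · rw [integral_const_mul, integral_sub hg.isProbDensity.integrable (integrable_const c),
      hg.isProbDensity.integral_eq_one, integral_const_circle, inv_mul_cancel₀ hθ.ne']
  · exact fun x => mul_nonneg (inv_nonneg.2 hθ.le)
      (sub_nonneg.2 (hc_exp.trans ((hg.mono hab.le).exp_neg_le hb.le x)))
  · exact (hg.logLip.sub_const ha hab.le dist_circle_le_one ((hg.mono hab.le).exp_neg_le hb.le)
      hc₀.le hc_mul.le).const_mul (inv_nonneg.2 hθ.le)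

end IsLogLipDensity

section Perturbation

variable {lam Astar a : ℝ} {g : Circle1 → ℝ} {T₁ T₂ : CM lam Astar}

theorem IsLogLipDensity.l1norm_transfer_sub_transfer_le_of_lt_half (hlam : 0 < lam)
    (hg : IsLogLipDensity a g) (ha : 0 ≤ a) (hδ : dC1 T₁ T₂ < 1 / 2) {κ : ℝ}
    (hκ : κ = (a + Astar / lam + 1) / lam) :
    l1norm (transfer T₁ g - transfer T₂ g) ≤ κ * Real.exp κ * dC1 T₁ T₂ * 2 := by
  have hκ₀ : 0 ≤ κ := by
    have := T₁.Astar_nonneg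
    rw [hκ]
    positivity
  have hδ₀ := dC1_nonneg T₁ T₂
  have hexp := exp_mul_sub_one_le hκ₀ hδ₀ (by linarith)
  have honesided : ∀ {S₁ S₂ : CM lam Astar}, dC1 S₁ S₂ = dC1 T₁ T₂ → ∀ x,
      transfer S₁ g x - transfer S₂ g x ≤ κ * Real.exp κ * dC1 T₁ T₂ * transfer S₂ g x := by
    intro S₁ S₂ hS x
    have hcompare := transfer_le_exp_mul_transfer (T₁ := S₁) (T₂ := S₂) hlam (hS ▸ hδ) ha
      hg.isProbDensity.nonneg hg.logLip x x
    have hexponent : ((a + Astar / lam) * (dC1 T₁ T₂ + dist x x) + dC1 T₁ T₂) / lam =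
        κ * dC1 T₁ T₂ := by
      rw [dist_self, hκ]
      ring
    rw [hS, hexponent] at hcompare
    have := mul_le_mul_of_nonneg_right hexp (transfer_nonneg hlam S₂ hg.isProbDensity.nonneg x)
    linarith
  refine (hg.isProbDensity.transfer hlam T₁).l1norm_sub_le_mul_two
    (hg.isProbDensity.transfer hlam T₂) fun x => ?_
  have h₁ := honesided (S₁ := T₁) (S₂ := T₂) rfl x
  have h₂ := honesided (S₁ := T₂) (S₂ := T₁) (dC1_comm _ _) x
  have hM : 0 ≤ κ * Real.exp κ * dC1 T₁ T₂ := by positivity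
  have hp₁ := mul_nonneg hM (transfer_nonneg hlam T₁ hg.isProbDensity.nonneg x)
  have hp₂ := mul_nonneg hM (transfer_nonneg hlam T₂ hg.isProbDensity.nonneg x)
  rw [mul_add, abs_le]
  constructor <;> linarith

theorem exists_l1norm_transfer_sub_transfer_le_mul_dC1 (hlam : 0 < lam) (hA : 0 ≤ Astar)
    (ha : 0 ≤ a) :
    ∃ K, 0 < K ∧ ∀ (T₁ T₂ : CM lam Astar) (g : Circle1 → ℝ), IsLogLipDensity a g →
      l1norm (transfer T₁ g - transfer T₂ g) ≤ K * dC1 T₁ T₂ := by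
  obtain ⟨κ, hκ⟩ : ∃ κ, κ = (a + Astar / lam + 1) / lam := ⟨_, rfl⟩
  have hκ₀ : 0 ≤ κ := hκ ▸ by positivity
  refine ⟨2 * (κ * Real.exp κ) + 4, by positivity, fun T₁ T₂ g hg => ?_⟩
  have hδ₀ := dC1_nonneg T₁ T₂
  rcases lt_or_ge (dC1 T₁ T₂) (1 / 2) with hδ | hδ
  · linarith [hg.l1norm_transfer_sub_transfer_le_of_lt_half hlam ha hδ hκ]
  · have htrivial := (hg.isProbDensity.transfer hlam T₁).l1norm_sub_le_two
      (hg.isProbDensity.transfer hlam T₂)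
    have : 0 ≤ 2 * (κ * Real.exp κ) * dC1 T₁ T₂ := by positivity
    linarith

end Perturbation

/-! ### Invariant cones and loss of memory -/

section InvariantCone

variable {lam Astar t : ℝ} {g : Circle1 → ℝ}

/-- The log-Lipschitz constant fixed by the recursion `a ↦ (a + Astar / lam) / lam` that a transfer
operator induces on log-Lipschitz constants. -/
noncomputable def fixedLogLip (lam Astar : ℝ) : ℝ := Astar / (lam * (lam - 1))

theorem fixedLogLip_nonneg (hlam : 1 < lam) (hA : 0 ≤ Astar) : 0 ≤ fixedLogLip lam Astar :=
  div_nonneg hA (mul_nonneg (by linarith) (by linarith))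

theorem add_fixedLogLip_add_div (hlam : 1 < lam) (t Astar : ℝ) :
    (t + fixedLogLip lam Astar + Astar / lam) / lam = t / lam + fixedLogLip lam Astar := by
  have : lam - 1 ≠ 0 := by linarith
  have : lam ≠ 0 := by linarith
  unfold fixedLogLip
  field_simp
  ring

theorem IsLogLipDensity.transfer (hlam : 1 < lam) (T : CM lam Astar) (ht : 0 ≤ t)
    (hg : IsLogLipDensity (t + fixedLogLip lam Astar) g) :
    IsLogLipDensity (t / lam + fixedLogLip lam Astar) (transfer T g) := by
  have hlam₀ : 0 < lam := one_pos.trans hlam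
  refine ⟨hg.isProbDensity.transfer hlam₀ T, ?_⟩
  rw [← add_fixedLogLip_add_div hlam]
  exact hg.logLip.transfer hlam₀ T (add_nonneg ht (fixedLogLip_nonneg hlam T.Astar_nonneg))
    hg.isProbDensity.nonneg

theorem IsLogLipDensity.transferIter (hlam : 1 < lam) (Ts : ℕ → CM lam Astar) (ht : 0 ≤ t)
    (hg : IsLogLipDensity (t + fixedLogLip lam Astar) g) (k : ℕ) :
    IsLogLipDensity (t / lam ^ k + fixedLogLip lam Astar) (transferIter Ts k g) := by
  induction k with
  | zero => simpa [_root_.transferIter] using hg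
  | succ k ih =>
    rw [pow_succ, ← div_div]
    exact ih.transfer hlam _ (by positivity)

theorem IsLogLipDensity.transferIter_of_le_mul_pow (hlam : 1 < lam) (Ts : ℕ → CM lam Astar)
    {a : ℝ} (ht : 0 ≤ t) {k : ℕ} (hat : a ≤ t * lam ^ k) (hg : IsLogLipDensity a g) :
    IsLogLipDensity (t + fixedLogLip lam Astar) (_root_.transferIter Ts k g) := by
  have hpow : 0 < lam ^ k := pow_pos (one_pos.trans hlam) k
  have hA := fixedLogLip_nonneg hlam (Ts 0).Astar_nonneg
  have := IsLogLipDensity.transferIter hlam Ts (mul_nonneg ht hpow.le)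
    (hg.mono (hat.trans (le_add_of_nonneg_right hA))) k
  rwa [mul_div_cancel_right₀ _ hpow.ne'] at this

theorem IsLogLipDensity.transferIter_same (hlam : 1 < lam) (Ts : ℕ → CM lam Astar) (ht : 0 ≤ t)
    (hg : IsLogLipDensity (t + fixedLogLip lam Astar) g) (k : ℕ) :
    IsLogLipDensity (t + fixedLogLip lam Astar) (_root_.transferIter Ts k g) :=
  (hg.transferIter hlam Ts ht k).mono <| by
    gcongr
    exact div_le_self ht (one_le_pow₀ hlam.le)

end InvariantCone

section MemoryLoss

variable {lam Astar t : ℝ}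

theorem exists_transferIter_sub_transferIter_eq (hlam : 1 < lam) (hA : 0 ≤ Astar) (ht : 0 < t) :
    ∃ θ ∈ Ioo (0 : ℝ) 1, ∀ (Ts : ℕ → CM lam Astar) (m : ℕ) (g h : Circle1 → ℝ),
      IsLogLipDensity (t + fixedLogLip lam Astar) g →
      IsLogLipDensity (t + fixedLogLip lam Astar) h →
      ∃ g' h', IsLogLipDensity (t + fixedLogLip lam Astar) g' ∧
        IsLogLipDensity (t + fixedLogLip lam Astar) h' ∧
        transferIter Ts m g - transferIter Ts m h = θ ^ m • (g' - h') := by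
  have ht' : t / lam < t := div_lt_self ht hlam
  have hA' := fixedLogLip_nonneg hlam hA
  obtain ⟨θ, hθ, hsplit⟩ := IsLogLipDensity.exists_eq_mul_add_const
    (a := t / lam + fixedLogLip lam Astar) (b := t + fixedLogLip lam Astar)
    (by positivity) (by linarith)
  refine ⟨θ, hθ, fun Ts m g h hg hh => ?_⟩
  induction m with
  | zero => exact ⟨g, h, hg, hh, by simp [transferIter]⟩
  | succ m ih =>
    obtain ⟨g₁, h₁, hg₁, hh₁, heq⟩ := ih
    obtain ⟨g₂, hg₂, hg_eq⟩ := hsplit _ (hg₁.transfer hlam (Ts (m + 1)) ht.le)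
    obtain ⟨h₂, hh₂, hh_eq⟩ := hsplit _ (hh₁.transfer hlam (Ts (m + 1)) ht.le)
    refine ⟨g₂, h₂, hg₂, hh₂, ?_⟩
    have hlam₀ : 0 < lam := one_pos.trans hlam
    rw [transferIter, transferIter, ← transfer_sub hlam₀, heq, transfer_smul,
      transfer_sub hlam₀]
    funext x
    simp only [Pi.smul_apply, Pi.sub_apply, smul_eq_mul, hg_eq, hh_eq]
    ring

theorem exists_l1norm_transferIter_sub_le_mul_pow (hlam : 1 < lam) (hA : 0 ≤ Astar)
    (ht : 0 < t) :
    ∃ θ ∈ Ioo (0 : ℝ) 1, ∀ (Ts : ℕ → CM lam Astar) (m : ℕ) (g h : Circle1 → ℝ),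
      IsLogLipDensity (t + fixedLogLip lam Astar) g →
      IsLogLipDensity (t + fixedLogLip lam Astar) h →
      l1norm (transferIter Ts m g - transferIter Ts m h) ≤ 2 * θ ^ m := by
  obtain ⟨θ, hθ, h⟩ := exists_transferIter_sub_transferIter_eq hlam hA ht
  refine ⟨θ, hθ, fun Ts m g₀ h₀ hg₀ hh₀ => ?_⟩
  obtain ⟨g, h, hg, hh, heq⟩ := h Ts m g₀ h₀ hg₀ hh₀
  have hθm : 0 ≤ θ ^ m := pow_nonneg hθ.1.le m
  rw [heq, l1norm_smul, abs_of_nonneg hθm, mul_comm]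
  gcongr
  exact hg.isProbDensity.l1norm_sub_le_two hh.isProbDensity

end MemoryLoss

/-! ### Approximation by log-Lipschitz densities -/

section Smoothing

variable {a : ℝ} {f u v : Circle1 → ℝ}

theorem IsLogLipDensity.inv_integral_smul (hv : Integrable v) (hv₀ : ∀ x, 0 ≤ v x)
    (hI : 0 < ∫ x, v x) (ha : LogLip a v) : IsLogLipDensity a ((∫ x, v x)⁻¹ • v) := by
  refine ⟨⟨hv.smul _, ?_, fun x => mul_nonneg (inv_nonneg.2 hI.le) (hv₀ x)⟩,
    ha.const_mul (inv_nonneg.2 hI.le)⟩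
  simp only [Pi.smul_apply, smul_eq_mul]
  rw [integral_const_mul, inv_mul_cancel₀ hI.ne']

theorem IsProbDensity.l1norm_inv_integral_smul_sub_le (hf : IsProbDensity f) (hv : Integrable v)
    (hv₀ : ∀ x, 0 ≤ v x) (hI : 0 < ∫ x, v x) :
    l1norm ((∫ x, v x)⁻¹ • v - f) ≤ 2 * l1norm (v - f) := by
  have hrescale : l1norm ((∫ x, v x)⁻¹ • v - v) ≤ l1norm (v - f) :=
    calc l1norm ((∫ x, v x)⁻¹ • v - v) = |(∫ x, v x)⁻¹ - 1| * l1norm v := by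
          rw [← l1norm_smul, sub_smul, one_smul]
      _ = |(∫ x, v x)⁻¹ - 1| * |∫ x, v x| := by
          simp only [l1norm, abs_of_nonneg (hv₀ _), abs_of_pos hI]
      _ = |∫ x, f x - v x| := by
          rw [← abs_mul, sub_mul, inv_mul_cancel₀ hI.ne', one_mul, integral_sub hf.integrable hv,
            hf.integral_eq_one]
      _ ≤ l1norm (f - v) := abs_integral_le_integral_abs
      _ = l1norm (v - f) := l1norm_sub_comm f v
  linarith [l1norm_sub_le (hv.smul (∫ x, v x)⁻¹) hv hf.integrable]

theorem l1norm_max_zero_add_sub_le (hf : IsProbDensity f) (hu : Integrable u) {ε : ℝ}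
    (hε : 0 ≤ ε) : l1norm ((fun x => max (u x) 0 + ε) - f) ≤ l1norm (u - f) + ε := by
  have hpt : ∀ x, |max (u x) 0 + ε - f x| ≤ |(u - f) x| + ε := fun x =>
    calc |max (u x) 0 + ε - f x| = |(max (u x) 0 - max (f x) 0) + ε| := by
          rw [max_eq_left (hf.nonneg x)]
          ring_nf
      _ ≤ |max (u x) 0 - max (f x) 0| + |ε| := abs_add_le _ _
      _ ≤ |(u - f) x| + ε := by
          rw [abs_of_nonneg hε]
          gcongr ?_ + ε
          exact abs_max_sub_max_le_abs (u x) (f x) 0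
  refine (l1norm_le_integral ((hu.sub hf.integrable).abs.add (integrable_const ε)) hpt).trans ?_
  rw [integral_add' (hu.sub hf.integrable).abs (integrable_const ε), integral_const_circle, l1norm]

theorem IsProbDensity.exists_isLogLipDensity_of_lipschitzWith (hf : IsProbDensity f) {K : NNReal}
    (hu : LipschitzWith K u) {ε : ℝ} (hε : 0 < ε) (huf : l1norm (u - f) ≤ ε) :
    ∃ g, IsLogLipDensity (K / ε) g ∧ l1norm (g - f) ≤ 4 * ε := by
  obtain ⟨v, hv⟩ : ∃ v : Circle1 → ℝ, v = fun x => max (u x) 0 + ε := ⟨_, rfl⟩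
  have hv_lip : LipschitzWith K v := by
    simpa only [add_zero, hv] using (hu.max_const 0).add (LipschitzWith.const ε)
  have hv_int : Integrable v := integrable_circle_of_continuous hv_lip.continuous
  have hεv : ∀ x, ε ≤ v x := fun x => hv ▸ le_add_of_nonneg_left (le_max_right _ _)
  have hv₀ : ∀ x, 0 ≤ v x := fun x => hε.le.trans (hεv x)
  have hI : 0 < ∫ x, v x := by
    have := integral_mono (integrable_const ε) hv_int hεv
    rw [integral_const_circle] at this
    exact hε.trans_le this
  refine ⟨_, .inv_integral_smul hv_int hv₀ hI (.of_lipschitzWith hv_lip hε hεv), ?_⟩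
  have hvf : l1norm (v - f) ≤ l1norm (u - f) + ε :=
    hv ▸ l1norm_max_zero_add_sub_le hf (integrable_circle_of_continuous hu.continuous) hε.le
  linarith [hf.l1norm_inv_integral_smul_sub_le hv_int hv₀ hI]

theorem IsProbDensity.exists_isLogLipDensity_l1norm_sub_le (hf : IsProbDensity f) {ε : ℝ}
    (hε : 0 < ε) : ∃ a g, IsLogLipDensity a g ∧ l1norm (g - f) ≤ ε := by
  obtain ⟨w, -, hwf, hw, hw_int⟩ :=
    hf.integrable.exists_hasCompactSupport_integral_sub_le (ε := ε / 8) (by positivity)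
  obtain ⟨K, u, hu, huw⟩ := exists_lipschitzWith_forall_abs_sub_le hw (ε := ε / 8) (by positivity)
  have hwf' : l1norm (w - f) ≤ ε / 8 := (l1norm_sub_comm w f).trans_le hwf
  have huf := l1norm_sub_le (integrable_circle_of_continuous hu.continuous) hw_int hf.integrable
  have huw' : l1norm (u - w) ≤ ε / 8 := l1norm_le_of_forall_abs_le huw
  obtain ⟨g, hg, hgf⟩ := hf.exists_isLogLipDensity_of_lipschitzWith hu (ε := ε / 4) (by positivity)
    (by linarith)
  exact ⟨_, g, hg, by linarith⟩

end Smoothing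

section Arc

theorem arcCoord_mem (z x : Circle1) : arcCoord z x ∈ Ioc (zrep z) (zrep z + 1) :=
  (AddCircle.equivIoc 1 (zrep z) x).2

theorem coe_arcCoord (z x : Circle1) : (arcCoord z x : Circle1) = x :=
  (AddCircle.equivIoc 1 (zrep z)).symm_apply_apply x

theorem coe_zrep (z : Circle1) : (zrep z : Circle1) = z :=
  (AddCircle.equivIco 1 0).symm_apply_apply z

theorem arcDist_le_one (z x y : Circle1) : arcDist z x y ≤ 1 := by
  have hx := arcCoord_mem z x
  have hy := arcCoord_mem z y
  rw [arcDist, abs_le]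
  constructor <;> linarith [hx.1, hx.2, hy.1, hy.2]

theorem dist_le_arcCoord_sub_zrep (z x : Circle1) : dist x z ≤ arcCoord z x - zrep z := by
  have h := dist_coe_circle_le (arcCoord z x) (zrep z)
  rwa [coe_arcCoord, coe_zrep, abs_of_nonneg (sub_nonneg.2 (arcCoord_mem z x).1.le)] at h

theorem dist_le_zrep_add_one_sub_arcCoord (z x : Circle1) :
    dist x z ≤ zrep z + 1 - arcCoord z x := by
  have h := dist_coe_circle_le (arcCoord z x) (zrep z + 1)
  rwa [coe_arcCoord, coe_circle_eq_iff.2 ⟨1, by rw [Int.cast_one]⟩, coe_zrep, abs_sub_comm,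
    abs_of_nonneg (sub_nonneg.2 (arcCoord_mem z x).2)] at h

theorem arcDist_le_dist_of_dist_lt {x y z : Circle1} (h : dist x y < dist x z) :
    arcDist z x y ≤ dist x y := by
  set p := arcCoord z x with hp
  set q := arcCoord z y with hq
  have hdist : dist x y = |p - q - round (p - q)| := by
    rw [← dist_coe_circle, hp, hq, coe_arcCoord, coe_arcCoord]
  -- The lift of `y` closest to `p` lies between the two lifts of `z` around `p`, so it is `q`.
  have hround : round (p - q) = 0 := by
    refine eq_of_abs_intCast_sub_lt_one ?_
    have hleft := h.trans_le (dist_le_arcCoord_sub_zrep z x)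
    have hright := h.trans_le (dist_le_zrep_add_one_sub_arcCoord z x)
    have hy := arcCoord_mem z y
    rw [hdist, abs_lt] at hleft hright
    rw [Int.cast_zero, abs_lt]
    constructor <;> linarith [hy.1, hy.2]
  rw [hdist, hround, Int.cast_zero, sub_zero, arcDist]

theorem volume_closedBall_circle_le (z : Circle1) {r : ℝ} (hr : 0 ≤ r) :
    volume.real (Metric.closedBall z r) ≤ 2 * r := by
  rw [measureReal_def, AddCircle.volume_closedBall, ENNReal.toReal_ofReal (by positivity)]
  exact min_le_right _ _

theorem ae_ne_circle (z : Circle1) : ∀ᵐ x : Circle1, x ≠ z := by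
  rw [ae_iff]
  simpa using AddCircle.volume_closedBall (T := (1 : ℝ)) (x := z) 0

theorem l1norm_le_of_ae_le_indicator_closedBall {f : Circle1 → ℝ} {z : Circle1} {r M : ℝ}
    (hr : 0 ≤ r) (hM : 0 ≤ M)
    (h : ∀ᵐ x, |f x| ≤ (Metric.closedBall z r).indicator (fun _ => M) x) :
    l1norm f ≤ 2 * r * M := by
  have hball : MeasurableSet (Metric.closedBall z r) := Metric.isClosed_closedBall.measurableSet
  calc l1norm f ≤ ∫ x, (Metric.closedBall z r).indicator (fun _ => M) x :=
        integral_mono_of_nonneg (.of_forall fun _ => abs_nonneg _)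
          ((integrable_const M).indicator hball) h
    _ = volume.real (Metric.closedBall z r) * M := by
        rw [integral_indicator_const _ hball, smul_eq_mul]
    _ ≤ 2 * r * M := by
        gcongr
        exact volume_closedBall_circle_le z hr

end Arc

section LipOnArc

variable {ρ : Circle1 → ℝ} {z : Circle1} {L r : ℝ}

theorem LipOnArc.le_one_add (hl : LipOnArc z L ρ) (hρ : IsProbDensity ρ) (hL : 0 ≤ L)
    {x : Circle1} (hx : x ≠ z) : ρ x ≤ 1 + L := by
  have hlow : ∀ᵐ y : Circle1, ρ x - L ≤ ρ y := by
    filter_upwards [ae_ne_circle z] with y hy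
    have hdist := mul_le_of_le_one_right hL (arcDist_le_one z x y)
    linarith [(abs_le.1 (hl x y hx hy)).2]
  have hint := integral_mono_ae (integrable_const (ρ x - L)) hρ.integrable hlow
  rw [integral_const_circle, hρ.integral_eq_one] at hint
  linarith

theorem LipOnArc.le_lipEnvelope (hl : LipOnArc z L ρ) (hρ : IsProbDensity ρ) (hL : 0 ≤ L)
    {K : NNReal} (hLK : L ≤ K) (hKr : 1 + L ≤ K * r) {x : Circle1} (hxz : r ≤ dist x z)
    (hx : x ≠ z) : ρ x ≤ lipEnvelope K ρ x := by
  have hfar : ρ x - 0 ≤ K * r := by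
    rw [sub_zero]
    exact (hl.le_one_add hρ hL hx).trans hKr
  have hnear : ∀ y, dist x y < r → ρ x ≤ ρ y + 0 + K * dist x y := fun y hxy => by
    have hy : y ≠ z := by
      rintro rfl
      exact hxz.not_gt hxy
    have hlip := (abs_le.1 (hl x y hx hy)).2
    have hdist : L * arcDist z x y ≤ K * dist x y := by
      gcongr
      exacts [abs_nonneg _, arcDist_le_dist_of_dist_lt (hxy.trans_le hxz)]
    linarith
  simpa using sub_le_lipEnvelope hρ.nonneg hfar le_rfl hnear

theorem LipOnArc.l1norm_lipEnvelope_sub_le (hl : LipOnArc z L ρ) (hρ : IsProbDensity ρ)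
    (hL : 0 ≤ L) {K : NNReal} (hLK : L ≤ K) (hr : 0 ≤ r) (hKr : 1 + L ≤ K * r) :
    l1norm (lipEnvelope K ρ - ρ) ≤ 2 * r * (1 + L) := by
  have hbdd : BddBelow (range ρ) := ⟨0, forall_mem_range.2 hρ.nonneg⟩
  refine l1norm_le_of_ae_le_indicator_closedBall (z := z) hr (by positivity) ?_
  filter_upwards [ae_ne_circle z] with x hx
  have hle : lipEnvelope K ρ x ≤ ρ x := lipEnvelope_le hbdd x
  rw [Pi.sub_apply, abs_sub_comm, abs_of_nonneg (sub_nonneg.2 hle)]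
  by_cases hxr : x ∈ Metric.closedBall z r
  · have hnonneg : 0 ≤ lipEnvelope K ρ x := _root_.le_lipEnvelope fun y =>
      add_nonneg (hρ.nonneg y) (by positivity)
    rw [indicator_of_mem hxr]
    linarith [hl.le_one_add hρ hL hx]
  · rw [indicator_of_notMem hxr]
    rw [Metric.mem_closedBall, not_le] at hxr
    exact sub_nonpos.2 (hl.le_lipEnvelope hρ hL hLK hKr hxr.le hx)

theorem LipOnArc.exists_isLogLipDensity_l1norm_sub_le (hl : LipOnArc z L ρ)
    (hρ : IsProbDensity ρ) (hL : 0 ≤ L) (hr₀ : 0 < r) (hr₁ : r ≤ 1) :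
    ∃ g, IsLogLipDensity (1 / (2 * r ^ 2)) g ∧ l1norm (g - ρ) ≤ 8 * (1 + L) * r := by
  set K : NNReal := .mk ((1 + L) / r) (by positivity) with hK
  have hLK : L ≤ K := by
    change L ≤ (1 + L) / r
    rw [le_div_iff₀ hr₀]
    linarith [mul_le_of_le_one_right hL hr₁]
  have hKr : 1 + L ≤ K * r := (div_mul_cancel₀ (1 + L) hr₀.ne').ge
  have hbdd : BddBelow (range ρ) := ⟨0, forall_mem_range.2 hρ.nonneg⟩
  obtain ⟨g, hg, hgρ⟩ := hρ.exists_isLogLipDensity_of_lipschitzWith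
    (lipschitzWith_lipEnvelope (K := K) hbdd) (by positivity)
    (hl.l1norm_lipEnvelope_sub_le hρ hL hLK hr₀.le hKr)
  have hconst : (K : ℝ) / (2 * r * (1 + L)) = 1 / (2 * r ^ 2) := by
    rw [hK, NNReal.coe_mk]
    field_simp
  exact ⟨g, hconst ▸ hg, hgρ.trans_eq (by ring)⟩

end LipOnArc

/-! ### Convergence to the SRB density -/

section Convergence

variable {lam Astar t : ℝ}

theorem IsSRBDensity.exists_isLogLipDensity_l1norm_sub_le (hlam : 1 < lam) {T : CM lam Astar}
    {r : Circle1 → ℝ} (hr : IsSRBDensity T r) (ht : 0 < t) {ε : ℝ} (hε : 0 < ε) :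
    ∃ g, IsLogLipDensity (t + fixedLogLip lam Astar) g ∧ l1norm (g - r) ≤ ε := by
  obtain ⟨a, g, hg, hgr⟩ := hr.1.exists_isLogLipDensity_l1norm_sub_le hε
  obtain ⟨N, hN⟩ := pow_unbounded_of_one_lt (a / t) hlam
  rw [div_lt_iff₀' ht] at hN
  exact ⟨_, hg.transferIter_of_le_mul_pow hlam (fun _ => T) ht.le hN.le,
    (hr.l1norm_transferIter_sub_le (one_pos.trans hlam) hg.isProbDensity.integrable N).trans hgr⟩

theorem exists_l1norm_transferIter_sub_srbDensity_le (hlam : 1 < lam) (hA : 0 ≤ Astar)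
    (ht : 0 < t) :
    ∃ θ ∈ Ioo (0 : ℝ) 1, ∀ (T : CM lam Astar) (r g : Circle1 → ℝ), IsSRBDensity T r →
      IsLogLipDensity (t + fixedLogLip lam Astar) g → ∀ m : ℕ,
      l1norm (transferIter (fun _ => T) m g - r) ≤ 2 * θ ^ m := by
  have hlam₀ : 0 < lam := one_pos.trans hlam
  obtain ⟨θ, hθ, hloss⟩ := exists_l1norm_transferIter_sub_le_mul_pow hlam hA ht
  refine ⟨θ, hθ, fun T r g hr hg m => le_of_forall_pos_le_add fun ε hε => ?_⟩
  obtain ⟨h, hh, hhr⟩ := hr.exists_isLogLipDensity_l1norm_sub_le hlam ht hε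
  have hg_int := (hg.isProbDensity.transferIter (Ts := fun _ => T) hlam₀ m).integrable
  have hh_int := (hh.isProbDensity.transferIter (Ts := fun _ => T) hlam₀ m).integrable
  calc l1norm (transferIter (fun _ => T) m g - r)
      ≤ l1norm (transferIter (fun _ => T) m g - transferIter (fun _ => T) m h) +
          l1norm (transferIter (fun _ => T) m h - r) :=
        l1norm_sub_le hg_int hh_int hr.1.integrable
    _ ≤ 2 * θ ^ m + ε := add_le_add (hloss _ m g h hg hh)
        ((hr.l1norm_transferIter_sub_le hlam₀ hh.isProbDensity.integrable m).trans hhr)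

theorem exists_l1norm_transferIter_sub_transferIter_le (hlam : 1 < lam) (hA : 0 ≤ Astar)
    (ht : 0 ≤ t) :
    ∃ K, 0 < K ∧ ∀ (Ts Ts' : ℕ → CM lam Astar) (g : Circle1 → ℝ) (δ : ℝ) (m : ℕ),
      IsLogLipDensity (t + fixedLogLip lam Astar) g →
      (∀ i ∈ Icc 1 m, dC1 (Ts i) (Ts' i) ≤ δ) →
      l1norm (transferIter Ts m g - transferIter Ts' m g) ≤ m * (K * δ) := by
  have hlam₀ : 0 < lam := one_pos.trans hlam
  obtain ⟨K, hK₀, hK⟩ := exists_l1norm_transfer_sub_transfer_le_mul_dC1 hlam₀ hA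
    (add_nonneg ht (fixedLogLip_nonneg hlam hA))
  refine ⟨K, hK₀, fun Ts Ts' g δ m hg hδ => ?_⟩
  induction m with
  | zero => simp [transferIter, l1norm]
  | succ m ih =>
    have hcone := hg.transferIter_same hlam Ts ht m
    have hg_int := hcone.isProbDensity.integrable
    have hg_int' := (hg.isProbDensity.transferIter (Ts := Ts') hlam₀ m).integrable
    have hnew : l1norm (transfer (Ts (m + 1)) (transferIter Ts m g) -
        transfer (Ts' (m + 1)) (transferIter Ts m g)) ≤ K * δ :=
      (hK _ _ _ hcone).trans <| by
        gcongr
        exact hδ _ ⟨by omega, le_rfl⟩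
    have hold : l1norm (transfer (Ts' (m + 1)) (transferIter Ts m g) -
        transfer (Ts' (m + 1)) (transferIter Ts' m g)) ≤ m * (K * δ) :=
      (l1norm_transfer_sub_transfer_le hlam₀ _ hg_int hg_int').trans <|
        ih fun i hi => hδ i ⟨hi.1, hi.2.trans m.le_succ⟩
    have htri := l1norm_sub_le (integrable_transfer hlam₀ (Ts (m + 1)) hg_int)
      (integrable_transfer hlam₀ (Ts' (m + 1)) hg_int)
      (integrable_transfer hlam₀ (Ts' (m + 1)) hg_int')
    rw [transferIter, transferIter, Nat.cast_add_one, add_one_mul]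
    linarith

theorem exists_l1norm_transferIter_add_sub_srbDensity_le (hlam : 1 < lam) (hA : 0 ≤ Astar)
    (ht : 0 < t) :
    ∃ K, 0 < K ∧ ∃ θ ∈ Ioo (0 : ℝ) 1, ∀ (Ts : ℕ → CM lam Astar) (T : CM lam Astar)
      (r g : Circle1 → ℝ) (a δ : ℝ) (j m : ℕ), IsSRBDensity T r → IsLogLipDensity a g →
      a ≤ t * lam ^ j → (∀ i ∈ Icc 1 m, dC1 (Ts (j + i)) T ≤ δ) →
      l1norm (transferIter Ts (j + m) g - r) ≤ m * (K * δ) + 2 * θ ^ m := by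
  obtain ⟨K, hK₀, hK⟩ := exists_l1norm_transferIter_sub_transferIter_le hlam hA ht.le
  obtain ⟨θ, hθ, hconv⟩ := exists_l1norm_transferIter_sub_srbDensity_le hlam hA ht
  refine ⟨K, hK₀, θ, hθ, fun Ts T r g a δ j m hr hg haj hδ => ?_⟩
  have hcone := hg.transferIter_of_le_mul_pow hlam Ts ht.le haj
  have hdens : ∀ Ss : ℕ → CM lam Astar, Integrable (transferIter Ss m (transferIter Ts j g)) :=
    fun Ss => (hcone.isProbDensity.transferIter (one_pos.trans hlam) m).integrable
  rw [transferIter_add]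
  exact (l1norm_sub_le (hdens _) (hdens fun _ => T) hr.1.integrable).trans
    (add_le_add (hK _ _ _ δ m hcone hδ) (hconv T r _ hr hcone m))

theorem exists_l1norm_transferIter_sub_srbDensity_le_of_lipOnArc (hlam : 1 < lam) (hA : 0 ≤ Astar)
    (ht : 0 < t) :
    ∃ K, 0 < K ∧ ∃ θ ∈ Ioo (0 : ℝ) 1, ∀ (Ts : ℕ → CM lam Astar) (T : CM lam Astar)
      (r ρ : Circle1 → ℝ) (z : Circle1) (L δ ε : ℝ) (j m : ℕ), IsSRBDensity T r →
      IsProbDensity ρ → LipOnArc z L ρ → 0 ≤ L → ε ∈ Ioc (0 : ℝ) 1 →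
      1 / (2 * ε ^ 2) ≤ t * lam ^ j → (∀ i ∈ Icc 1 m, dC1 (Ts (j + i)) T ≤ δ) →
      l1norm (transferIter Ts (j + m) ρ - r) ≤
        8 * (1 + L) * ε + (m * (K * δ) + 2 * θ ^ m) := by
  have hlam₀ : 0 < lam := one_pos.trans hlam
  obtain ⟨K, hK₀, θ, hθ, hbound⟩ := exists_l1norm_transferIter_add_sub_srbDensity_le hlam hA ht
  refine ⟨K, hK₀, θ, hθ, fun Ts T r ρ z L δ ε j m hr hρ hl hL hε hj hδ => ?_⟩
  obtain ⟨g, hg, hgρ⟩ := hl.exists_isLogLipDensity_l1norm_sub_le hρ hL hε.1 hε.2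
  have hg_int := hg.isProbDensity.integrable
  have hsmooth := (l1norm_transferIter_sub_le (Ts := Ts) hlam₀ hρ.integrable hg_int (j + m)).trans
    ((l1norm_sub_comm ρ g).trans_le hgρ)
  exact (l1norm_sub_le (integrable_transferIter hlam₀ hρ.integrable _)
    (integrable_transferIter hlam₀ hg_int _) hr.1.integrable).trans
      (add_le_add hsmooth (hbound Ts T r g _ δ j m hr hg hj hδ))

end Convergence

section Array

variable {lam Astar η : ℝ} {γ : ℝ → CM lam Astar} {Tarr : ℕ → ℕ → CM lam Astar}

theorem ArrayApprox.exists_dC1_le (hT : ArrayApprox η γ Tarr) :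
    ∃ M, 0 ≤ M ∧ ∀ n i : ℕ, 1 ≤ n → i ≤ n →
      dC1 (Tarr n i) (γ (i / n)) ≤ M * (n : ℝ) ^ (-η) := by
  obtain ⟨M, hM⟩ := hT
  refine ⟨|M|, abs_nonneg M, fun n i hn hi => ?_⟩
  have hn₀ : (0 : ℝ) < n := by exact_mod_cast hn
  have hin : (i : ℝ) / n ≤ 1 := (div_le_one hn₀).2 (by exact_mod_cast hi)
  have h := hM n hn (i / n) ⟨by positivity, hin⟩
  rw [mul_div_cancel₀ _ hn₀.ne', Nat.floor_natCast] at h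
  rw [Real.rpow_neg hn₀.le, ← div_eq_mul_inv, le_div_iff₀' (by positivity)]
  exact h.trans (le_abs_self M)

theorem HolderCurve.exists_dC1_le (hγ : HolderCurve η γ) (hη : 0 ≤ η) :
    ∃ H, 0 ≤ H ∧ ∀ n j k m : ℕ, 1 ≤ n → j ≤ k → k ≤ n → k ≤ j + m →
      dC1 (γ (j / n)) (γ (k / n)) ≤ H * (m : ℝ) ^ η * (n : ℝ) ^ (-η) := by
  obtain ⟨H, hH⟩ := hγ
  refine ⟨|H|, abs_nonneg H, fun n j k m hn hjk hkn hkm => ?_⟩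
  have hn₀ : (0 : ℝ) < n := by exact_mod_cast hn
  have hmem : ∀ i ≤ n, (i : ℝ) / n ∈ Icc (0 : ℝ) 1 := fun i hi =>
    ⟨by positivity, (div_le_one hn₀).2 (by exact_mod_cast hi)⟩
  have hdist : |(j : ℝ) / n - k / n| ≤ m / n := by
    have hjk' : (j : ℝ) ≤ k := by exact_mod_cast hjk
    have hkm' : (k : ℝ) ≤ j + m := by exact_mod_cast hkm
    rw [← sub_div, abs_div, abs_of_pos hn₀, abs_sub_comm, abs_of_nonneg (sub_nonneg.2 hjk')]
    gcongr
    linarith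
  calc dC1 (γ (j / n)) (γ (k / n)) ≤ H * |(j : ℝ) / n - k / n| ^ η :=
        hH _ (hmem j (hjk.trans hkn)) _ (hmem k hkn)
    _ ≤ |H| * ((m : ℝ) / n) ^ η := by
        gcongr
        exact le_abs_self H
    _ = |H| * (m : ℝ) ^ η * (n : ℝ) ^ (-η) := by
        rw [Real.div_rpow m.cast_nonneg hn₀.le, Real.rpow_neg hn₀.le]
        ring

theorem ArrayApprox.exists_dC1_le_mul_rpow (hT : ArrayApprox η γ Tarr) (hγ : HolderCurve η γ)
    (hη : 0 ≤ η) :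
    ∃ B, 0 < B ∧ ∀ n j k m : ℕ, 1 ≤ n → j ≤ k → k ≤ n → k ≤ j + m →
      dC1 (Tarr n j) (Tarr n k) ≤ B * (1 + m : ℝ) ^ η * (n : ℝ) ^ (-η) := by
  obtain ⟨M, hM₀, hM⟩ := hT.exists_dC1_le
  obtain ⟨H, hH₀, hH⟩ := hγ.exists_dC1_le hη
  refine ⟨2 * M + H + 1, by positivity, fun n j k m hn hjk hkn hkm => ?_⟩
  have hj := hM n j hn (hjk.trans hkn)
  have hk := dC1_comm (Tarr n k) _ ▸ hM n k hn hkn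
  have hpow : (m : ℝ) ^ η ≤ (1 + m : ℝ) ^ η := by
    gcongr
    linarith
  have hone : 1 ≤ (1 + m : ℝ) ^ η := Real.one_le_rpow (by simp) hη
  calc dC1 (Tarr n j) (Tarr n k)
      ≤ dC1 (Tarr n j) (γ (j / n)) + (dC1 (γ (j / n)) (γ (k / n)) + dC1 (γ (k / n)) (Tarr n k)) :=
        (dC1_triangle _ _ _).trans (add_le_add_right (dC1_triangle _ _ _) _)
    _ ≤ (2 * M * 1 + H * (m : ℝ) ^ η) * (n : ℝ) ^ (-η) := by
        linarith [hH n j k m hn hjk hkn hkm]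
    _ ≤ (2 * M * (1 + m : ℝ) ^ η + H * (1 + m : ℝ) ^ η) * (n : ℝ) ^ (-η) := by gcongr
    _ ≤ (2 * M + H + 1) * (1 + m : ℝ) ^ η * (n : ℝ) ^ (-η) := by
        gcongr
        linarith

theorem exists_l1norm_arrTransfer_sub_srbDensity_le (hlam : 1 < lam) (hη : 0 ≤ η)
    (hγ : HolderCurve η γ) (hT : ArrayApprox η γ Tarr) :
    ∃ K, 0 < K ∧ ∃ θ ∈ Ioo (0 : ℝ) 1, ∀ (ρ r : Circle1 → ℝ) (z : Circle1) (L ε : ℝ) (n j m : ℕ),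
      IsProbDensity ρ → LipOnArc z L ρ → 0 ≤ L → ε ∈ Ioc (0 : ℝ) 1 →
      1 / (2 * ε ^ 2) ≤ lam ^ (j + 1) → 1 ≤ n → j + m ≤ n → IsSRBDensity (Tarr n (j + m)) r →
      l1norm (arrTransfer Tarr n (j + m) ρ - r) ≤
        8 * (1 + L) * ε + (K * ((1 + m : ℝ) ^ (1 + η) * (n : ℝ) ^ (-η)) + 2 * θ ^ m) := by
  obtain ⟨B, hB₀, hB⟩ := hT.exists_dC1_le_mul_rpow hγ hη
  obtain ⟨K, hK₀, θ, hθ, hbound⟩ := exists_l1norm_transferIter_sub_srbDensity_le_of_lipOnArc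
    (t := lam) hlam (Tarr 0 0).Astar_nonneg (one_pos.trans hlam)
  refine ⟨K * B, by positivity, θ, hθ, fun ρ r z L ε n j m hρ hl hL hε hj hn hjm hr => ?_⟩
  have hclose : ∀ i ∈ Icc 1 m,
      dC1 (Tarr n (j + i)) (Tarr n (j + m)) ≤ B * (1 + m : ℝ) ^ η * (n : ℝ) ^ (-η) :=
    fun i hi => hB n _ _ m hn (Nat.add_le_add_left hi.2 j) hjm (by omega)
  rw [pow_succ' lam] at hj
  rw [arrTransfer_eq_transferIter]
  refine (hbound _ _ r ρ z L _ ε j m hr hρ hl hL hε hj hclose).trans ?_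
  gcongr 8 * (1 + L) * ε + (?_ + 2 * θ ^ m)
  calc m * (K * (B * (1 + m : ℝ) ^ η * (n : ℝ) ^ (-η)))
      ≤ (1 + m) * (K * (B * (1 + m : ℝ) ^ η * (n : ℝ) ^ (-η))) := by
        gcongr
        linarith
    _ = K * B * ((1 + m : ℝ) ^ (1 + η) * (n : ℝ) ^ (-η)) := by
        rw [Real.rpow_one_add' (by positivity) (by positivity)]
        ring

end Array

theorem statement7_general {lam Astar : ℝ} (hlam : 1 < lam) {η : ℝ} (hη : 0 < η)
    (γ : ℝ → CM lam Astar) (hγ : HolderCurve η γ)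
    (Tarr : ℕ → ℕ → CM lam Astar) (hT : ArrayApprox η γ Tarr) :
    ∃ b : ℝ, 0 < b ∧
      ∀ η' : ℝ, η' < η → ∀ L : ℝ, 0 ≤ L → ∃ C : ℝ, 0 < C ∧
        ∀ (ρ : Circle1 → ℝ) (z : Circle1), IsProbDensity ρ → LipOnArc z L ρ →
          ∀ n k : ℕ, 1 ≤ n → k ≤ n → b * Real.log n ≤ k →
            ∀ ρhat : Circle1 → ℝ, IsSRBDensity (Tarr n k) ρhat →
              l1norm (fun x => arrTransfer Tarr n k ρ x - ρhat x) ≤ C * (n : ℝ) ^ (-η') := by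
  obtain ⟨K, hK₀, θ, hθ, hbound⟩ := exists_l1norm_arrTransfer_sub_srbDensity_le hlam hη.le hγ hT
  have hθ_inv : 1 < θ⁻¹ := (one_lt_inv₀ hθ.1).2 hθ.2
  have hlog_lam : 0 < Real.log lam := Real.log_pos hlam
  have hlog_θ : 0 < Real.log θ⁻¹ := Real.log_pos hθ_inv
  refine ⟨η / Real.log θ⁻¹ + η * 2 / Real.log lam, by positivity, fun η' hη' L hL => ?_⟩
  obtain ⟨D, hD₀, hD⟩ := exists_log_rpow_mul_rpow_neg_le (β := η / Real.log θ⁻¹) (q := 1 + η)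
    (by positivity) (by positivity) hη'
  refine ⟨8 * (1 + L) + (K * D + 2), by positivity, fun ρ z hρ hl n k hn hkn hbk r hr => ?_⟩
  have hn₁ : (1 : ℝ) ≤ n := by exact_mod_cast hn
  have hn₀ : (0 : ℝ) < n := one_pos.trans_le hn₁
  obtain ⟨j, m, rfl, hj, hθm, hm⟩ :=
    exists_add_eq_of_mul_log_le hθ_inv hlam hn₁ hη.le (by positivity) hbk
  have hmono : (n : ℝ) ^ (-η) ≤ (n : ℝ) ^ (-η') := by gcongr
  rw [inv_pow, le_inv_comm₀ (by positivity) (pow_pos hθ.1 m), ← Real.rpow_neg hn₀.le] at hθm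
  calc l1norm (arrTransfer Tarr n (j + m) ρ - r)
      ≤ 8 * (1 + L) * (n : ℝ) ^ (-η) +
          (K * ((1 + m : ℝ) ^ (1 + η) * (n : ℝ) ^ (-η)) + 2 * θ ^ m) :=
        hbound ρ r z L _ n j m hρ hl hL
          ⟨by positivity, Real.rpow_le_one_of_one_le_of_nonpos hn₁ (neg_nonpos.2 hη.le)⟩
          ((one_div_two_mul_rpow_neg_sq_le hn₀.le η).trans hj) hn hkn hr
    _ ≤ 8 * (1 + L) * (n : ℝ) ^ (-η') +
          (K * (D * (n : ℝ) ^ (-η')) + 2 * (n : ℝ) ^ (-η')) := by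
        gcongr 8 * (1 + L) * ?_ + (K * ?_ + 2 * ?_)
        exacts [hD n hn₁ m m.cast_nonneg hm, hθm.trans hmono]
    _ = (8 * (1 + L) + (K * D + 2)) * (n : ℝ) ^ (-η') := by ring

/-- Lemma `lem:pushforward_vs_SRB`.  There is `b > 0` such that for every
`η' < η` and every probability density `ρ` Lipschitz on `J_z` with constant `L`, the
pushforward densities satisfy `‖ρ_{n,k} − ρ̂_{n,k}‖_{L¹(𝔪)} ≤ C n^{−η'}` whenever
`k ≥ b log n`, with `C` depending only on `η'` and `L`. -/
theorem statement7 {lam Astar : ℝ} (hlam : 1 < lam) (hA : 0 < Astar)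
    {η : ℝ} (hη : η ∈ Set.Ioo (0 : ℝ) 1)
    (γ : ℝ → CM lam Astar) (hγ : HolderCurve η γ)
    (Tarr : ℕ → ℕ → CM lam Astar) (hT : ArrayApprox η γ Tarr) :
    ∃ b : ℝ, 0 < b ∧
      ∀ η' : ℝ, η' < η → ∀ L : ℝ, 0 < L → ∃ C : ℝ, 0 < C ∧
        ∀ (ρ : Circle1 → ℝ) (z : Circle1), IsProbDensity ρ → LipOnArc z L ρ →
          ∀ n k : ℕ, 1 ≤ n → k ≤ n → b * Real.log n ≤ k →
            ∀ ρhat : Circle1 → ℝ, IsSRBDensity (Tarr n k) ρhat →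
              l1norm (fun x => arrTransfer Tarr n k ρ x - ρhat x) ≤ C * (n : ℝ) ^ (-η') := by
  obtain ⟨b, hb, h⟩ := statement7_general hlam hη.1 γ hγ Tarr hT
  exact ⟨b, hb, fun η' hη' L hL => h η' hη' L hL.le⟩
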